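/- arXiv:1008.5030 — 4 statements merged into one kernel-verified Lean document; each statement's English description precedes it below -/
import Mathlib

section
/- Suppose ω : ℝ → ℝ is Lipschitz with values in (−1,0), sup_ℝ ω < 0, and there exists A > 0 such that inf_{y₁∈ℝ} ∫₀^A |ω'(y₁+t)|² dt > 0. Then there exists a constant 𝒞 > 0 such that every smooth compactly supported vector field u : closure(R) → ℝ² satisfying the tangency condition u·ν = 0 on Γ obeys the Poincaré inequality ‖u‖_{L²(R)} ≤ 𝒞 ‖∇u‖_{L²(R)}. -/
open MeasureTheory Real Set Filter

noncomputable section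

/-- The rough layer `R = {y : ω(y₁) < y₂ < 0}`. -/
def layerR (ω : ℝ → ℝ) : Set (ℝ × ℝ) := {y : ℝ × ℝ | ω y.1 < y.2 ∧ y.2 < 0}

/-- Squared Euclidean norm of a vector of `ℝ²`. -/
def vsq (w : ℝ × ℝ) : ℝ := w.1 ^ 2 + w.2 ^ 2

/-- Squared Frobenius norm of the full gradient `∇u`. -/
def gradSq (u : ℝ × ℝ → ℝ × ℝ) (y : ℝ × ℝ) : ℝ :=
  vsq (fderiv ℝ u y (1, 0)) + vsq (fderiv ℝ u y (0, 1))

/-- The tangency condition `u · ν = 0` on `Γ = {y₂ = ω(y₁)}`, i.e.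
`u(y₁, ω(y₁)) · (−ω'(y₁), 1) = 0` for a.e. `y₁`. -/
def TangentOn (ω : ℝ → ℝ) (u : ℝ × ℝ → ℝ × ℝ) : Prop :=
  ∀ᵐ y₁ ∂(volume : Measure ℝ),
    (u (y₁, ω y₁)).1 * (-(deriv ω y₁)) + (u (y₁, ω y₁)).2 = 0

theorem sq_intervalIntegral_le {f : ℝ → ℝ} (hf : Continuous f) {a b : ℝ} (hab : a ≤ b) :
    (∫ t in a..b, f t) ^ 2 ≤ (b - a) * ∫ t in a..b, f t ^ 2 := by
  set I := ∫ t in a..b, f t with hI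
  rcases hab.eq_or_lt with rfl | hlt
  · simp [hI]
  have hnonneg : 0 ≤ ∫ t in a..b, ((b - a) * f t - I) ^ 2 :=
    intervalIntegral.integral_nonneg hab fun t _ => sq_nonneg _
  have hexpand : ∫ t in a..b, ((b - a) * f t - I) ^ 2 =
      (b - a) ^ 2 * (∫ t in a..b, f t ^ 2) - 2 * (b - a) * I * I + (b - a) * I ^ 2 := by
    have hpt : ∀ t, ((b - a) * f t - I) ^ 2 =
        (b - a) ^ 2 * f t ^ 2 - 2 * (b - a) * I * f t + I ^ 2 := fun t => by ring
    simp_rw [hpt]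
    rw [intervalIntegral.integral_add, intervalIntegral.integral_sub,
      intervalIntegral.integral_const_mul, intervalIntegral.integral_const_mul,
      intervalIntegral.integral_const, smul_eq_mul]
    all_goals exact Continuous.intervalIntegrable (by fun_prop) _ _
  rw [hexpand] at hnonneg
  have hpos : 0 < b - a := sub_pos.2 hlt
  have : 0 ≤ (b - a) * ((b - a) * (∫ t in a..b, f t ^ 2) - I ^ 2) := by linarith
  linarith [nonneg_of_mul_nonneg_right this hpos]

theorem continuous_vsq : Continuous vsq := by
  unfold vsq; fun_prop

theorem vsq_nonneg (w : ℝ × ℝ) : 0 ≤ vsq w := by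
  unfold vsq; positivity

theorem vsq_sub_le (v w x : ℝ × ℝ) : vsq (v - x) ≤ 2 * vsq (v - w) + 2 * vsq (w - x) := by
  simp only [vsq, Prod.fst_sub, Prod.snd_sub]
  linarith [sq_nonneg (v.1 - w.1 - (w.1 - x.1)), sq_nonneg (v.2 - w.2 - (w.2 - x.2))]

theorem vsq_sub_comm (v w : ℝ × ℝ) : vsq (v - w) = vsq (w - v) := by
  simp only [vsq, Prod.fst_sub, Prod.snd_sub]; ring

/-- One-dimensional oscillation estimate along a `C¹` curve. -/
theorem vsq_sub_le_integral {φ φ' : ℝ → ℝ × ℝ} (hφ : ∀ t, HasDerivAt φ (φ' t) t)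
    (hφ' : Continuous φ') {a b p q : ℝ} (hp : p ∈ Icc a b) (hq : q ∈ Icc a b) :
    vsq (φ p - φ q) ≤ (b - a) * ∫ t in a..b, vsq (φ' t) := by
  wlog hqp : q ≤ p generalizing p q
  · rw [vsq_sub_comm]; exact this hq hp (le_of_not_ge hqp)
  have hab : a ≤ b := hp.1.trans hp.2
  have hc : Continuous fun t => vsq (φ' t) := continuous_vsq.comp hφ'
  have h1 : ∫ t in q..p, (φ' t).1 = (φ p).1 - (φ q).1 :=
    intervalIntegral.integral_eq_sub_of_hasDerivAt (f := fun t => (φ t).1)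
      (fun t _ => (hφ t).fst) (Continuous.intervalIntegrable (by fun_prop) _ _)
  have h2 : ∫ t in q..p, (φ' t).2 = (φ p).2 - (φ q).2 :=
    intervalIntegral.integral_eq_sub_of_hasDerivAt (f := fun t => (φ t).2)
      (fun t _ => (hφ t).snd) (Continuous.intervalIntegrable (by fun_prop) _ _)
  calc vsq (φ p - φ q) = (∫ t in q..p, (φ' t).1) ^ 2 + (∫ t in q..p, (φ' t).2) ^ 2 := by
        rw [h1, h2]; rfl
    _ ≤ (p - q) * (∫ t in q..p, (φ' t).1 ^ 2) + (p - q) * ∫ t in q..p, (φ' t).2 ^ 2 :=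
        add_le_add (sq_intervalIntegral_le (by fun_prop) hqp)
          (sq_intervalIntegral_le (by fun_prop) hqp)
    _ = (p - q) * ∫ t in q..p, vsq (φ' t) := by
        rw [← mul_add, ← intervalIntegral.integral_add] <;>
          first | rfl | exact Continuous.intervalIntegrable (by fun_prop) _ _
    _ ≤ (b - a) * ∫ t in a..b, vsq (φ' t) := by
        refine mul_le_mul (by linarith [hp.2, hq.1]) ?_
          (intervalIntegral.integral_nonneg hqp fun t _ => vsq_nonneg _) (by linarith)
        exact intervalIntegral.integral_mono_interval hq.1 hqp hp.2
          (Eventually.of_forall fun t => vsq_nonneg _) (hc.intervalIntegrable _ _)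

/-- Integrating a sliding-window integral multiplies the total integral by the window length. -/
theorem integral_sliding_window {f : ℝ → ℝ} (hf : Integrable f) {L : ℝ} (hL : 0 ≤ L) :
    Integrable (fun a => ∫ x in a..a + L, f x) ∧
      ∫ a, ∫ x in a..a + L, f x = L * ∫ x, f x := by
  have hshift : ∀ a, ∫ x in a..a + L, f x = ∫ t in Ioc 0 L, f (a + t) := fun a => by
    rw [← intervalIntegral.integral_of_le hL, intervalIntegral.integral_comp_add_left, add_zero]
  have hint : Integrable (fun z : ℝ × ℝ => f (z.1 + z.2))
      ((volume : Measure ℝ).prod (volume.restrict (Ioc 0 L))) := by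
    refine (integrable_prod_iff' ?_).2 ⟨?_, ?_⟩
    · have h1 : AEStronglyMeasurable (fun z : ℝ × ℝ => f (z.1 + z.2))
          ((volume : Measure ℝ).prod (volume : Measure ℝ)) :=
        hf.aestronglyMeasurable.comp_quasiMeasurePreserving
          (quasiMeasurePreserving_add volume volume)
      refine h1.mono_ac ?_
      exact Measure.AbsolutelyContinuous.rfl.prod Measure.absolutelyContinuous_restrict
    · exact Eventually.of_forall fun t => hf.comp_add_right t
    · simp only [integral_add_right_eq_self (fun x => ‖f x‖)]
      exact integrable_const _
  simp_rw [hshift]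
  refine ⟨hint.integral_prod_left, ?_⟩
  rw [integral_integral_swap hint]
  simp only [integral_add_right_eq_self f]
  simp [hL]

theorem intervalIntegrable_deriv_sq {ω : ℝ → ℝ} {K : NNReal} (hlip : LipschitzWith K ω)
    (a b : ℝ) : IntervalIntegrable (fun x => deriv ω x ^ 2) volume a b := by
  refine (intervalIntegrable_const (c := (K : ℝ) ^ 2)).mono_fun
    ((measurable_deriv ω).pow_const 2).aestronglyMeasurable (Eventually.of_forall fun x => ?_)
  have := norm_deriv_le_of_lipschitz hlip (x₀ := x)
  simp only [norm_pow]
  gcongr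
  simpa using this

theorem lipschitz_integral_deriv {ω : ℝ → ℝ} {K : NNReal} (hlip : LipschitzWith K ω) (a b : ℝ) :
    IntervalIntegrable (deriv ω) volume a b ∧ ∫ x in a..b, deriv ω x = ω b - ω a :=
  have h := (hlip.lipschitzOnWith (s := uIcc a b)).absolutelyContinuousOnInterval
  ⟨h.intervalIntegrable_deriv, h.integral_deriv_eq_sub⟩

theorem integral_nat_windows_ge {f : ℝ → ℝ} (hf : ∀ a b, IntervalIntegrable f volume a b)
    {A δ : ℝ} (h : ∀ a, δ ≤ ∫ x in a..a + A, f x) (n : ℕ) (a : ℝ) :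
    n * δ ≤ ∫ x in a..a + n * A, f x := by
  induction n with
  | zero => simp
  | succ n ih =>
    have hsplit := intervalIntegral.integral_add_adjacent_intervals
      (hf a (a + n * A)) (hf (a + n * A) (a + n * A + A))
    have heq : a + ((n + 1 : ℕ) : ℝ) * A = a + n * A + A := by push_cast; ring
    rw [heq, ← hsplit]
    push_cast
    linarith [h (a + n * A)]

/-- On sufficiently long windows, constant vectors are controlled by their defect of tangency
to a bounded non-degenerate graph. -/
theorem exists_window_coercive {ω : ℝ → ℝ} {K : NNReal} (hlip : LipschitzWith K ω)
    (hval : ∀ t, ω t ∈ Ioo (-1 : ℝ) 0)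
    (hnd : ∃ A > 0, 0 < ⨅ y₁ : ℝ, ∫ t in (0 : ℝ)..A, (deriv ω (y₁ + t)) ^ 2) :
    ∃ L > 0, ∀ (a : ℝ) (c : ℝ × ℝ),
      vsq c ≤ ∫ x in a..a + L, (c.2 - c.1 * deriv ω x) ^ 2 := by
  obtain ⟨A, hA, hδ⟩ := hnd
  set δ := ⨅ y₁ : ℝ, ∫ t in (0 : ℝ)..A, (deriv ω (y₁ + t)) ^ 2 with hδ_def
  have hwin : ∀ a, δ ≤ ∫ x in a..a + A, deriv ω x ^ 2 := fun a => by
    have hbdd : BddBelow (range fun y₁ : ℝ => ∫ t in (0 : ℝ)..A, (deriv ω (y₁ + t)) ^ 2) := by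
      refine ⟨0, ?_⟩
      rintro _ ⟨y, rfl⟩
      exact intervalIntegral.integral_nonneg hA.le fun t _ => sq_nonneg _
    have h := ciInf_le hbdd a
    rwa [intervalIntegral.integral_comp_add_left (fun x => deriv ω x ^ 2), add_zero] at h
  obtain ⟨n, hn⟩ := exists_nat_ge (max (2 / A) (2 / δ))
  have hnA : 2 ≤ n * A := (div_le_iff₀ hA).1 ((le_max_left _ _).trans hn)
  have hnδ : 2 ≤ n * δ := (div_le_iff₀ hδ).1 ((le_max_right _ _).trans hn)
  refine ⟨n * A, by linarith, fun a c => ?_⟩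
  have hsq := integral_nat_windows_ge (intervalIntegrable_deriv_sq hlip) hwin n a
  obtain ⟨hi, hd⟩ := lipschitz_integral_deriv hlip a (a + n * A)
  have hexpand : ∫ x in a..a + n * A, (c.2 - c.1 * deriv ω x) ^ 2 =
      n * A * c.2 ^ 2 - 2 * c.1 * c.2 * (ω (a + n * A) - ω a) +
        c.1 ^ 2 * ∫ x in a..a + n * A, deriv ω x ^ 2 := by
    have hpt : ∀ x, (c.2 - c.1 * deriv ω x) ^ 2 =
        c.2 ^ 2 - 2 * c.1 * c.2 * deriv ω x + c.1 ^ 2 * deriv ω x ^ 2 := fun x => by ring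
    simp_rw [hpt]
    rw [intervalIntegral.integral_add (intervalIntegrable_const.sub (hi.const_mul _))
        ((intervalIntegrable_deriv_sq hlip _ _).const_mul _),
      intervalIntegral.integral_sub intervalIntegrable_const (hi.const_mul _),
      intervalIntegral.integral_const_mul, intervalIntegral.integral_const_mul,
      intervalIntegral.integral_const, hd, smul_eq_mul, add_sub_cancel_left]
  rw [hexpand]
  set d := ω (a + n * A) - ω a with hd_def
  have hd1 : d ^ 2 ≤ 1 := by
    have h1 := hval a
    have h2 := hval (a + n * A)
    rw [sq_le_one_iff_abs_le_one, abs_le]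
    constructor <;> linarith [h1.1, h1.2, h2.1, h2.2]
  have h1 : 2 * c.2 ^ 2 ≤ n * A * c.2 ^ 2 := by gcongr
  have h2 : 2 * c.1 ^ 2 ≤ c.1 ^ 2 * ∫ x in a..a + n * A, deriv ω x ^ 2 := by
    rw [mul_comm]; gcongr; exact hnδ.trans hsq
  have h3 : c.1 ^ 2 * d ^ 2 ≤ c.1 ^ 2 * 1 := by gcongr
  unfold vsq
  linarith [sq_nonneg (c.2 - c.1 * d)]

theorem gradSq_nonneg (u : ℝ × ℝ → ℝ × ℝ) (y : ℝ × ℝ) : 0 ≤ gradSq u y :=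
  add_nonneg (vsq_nonneg _) (vsq_nonneg _)

theorem integrable_vsq_comp {u : ℝ × ℝ → ℝ × ℝ} (hu : Continuous u) (hs : HasCompactSupport u) :
    Integrable fun y => vsq (u y) :=
  (continuous_vsq.comp hu).integrable_of_hasCompactSupport
    (hs.comp_left (g := vsq) (by simp [vsq]))

theorem continuous_gradSq {u : ℝ × ℝ → ℝ × ℝ} (hu : ContDiff ℝ 1 u) : Continuous (gradSq u) := by
  have hd : Continuous (fderiv ℝ u) := hu.continuous_fderiv one_ne_zero
  exact (continuous_vsq.comp (hd.clm_apply continuous_const)).add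
    (continuous_vsq.comp (hd.clm_apply continuous_const))

theorem hasCompactSupport_gradSq {u : ℝ × ℝ → ℝ × ℝ} (hs : HasCompactSupport u) :
    HasCompactSupport (gradSq u) :=
  (hs.fderiv ℝ).comp_left
    (g := fun T : ℝ × ℝ →L[ℝ] ℝ × ℝ => vsq (T (1, 0)) + vsq (T (0, 1))) (by simp [vsq])

theorem hasCompactSupport_horizontal {E : Type*} [Zero E] {F : ℝ × ℝ → E}
    (hF : HasCompactSupport F) (s : ℝ) : HasCompactSupport fun x => F (x, s) := by
  refine HasCompactSupport.intro (hF.isCompact.image continuous_fst) fun x hx => ?_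
  by_contra hne
  exact hx ⟨(x, s), subset_tsupport F hne, rfl⟩

theorem vsq_sub_le_horizontal {u : ℝ × ℝ → ℝ × ℝ} (hu : ContDiff ℝ 1 u) (s : ℝ) {a b p q : ℝ}
    (hp : p ∈ Icc a b) (hq : q ∈ Icc a b) :
    vsq (u (p, s) - u (q, s)) ≤ (b - a) * ∫ x in a..b, gradSq u (x, s) := by
  have hd : Continuous (fderiv ℝ u) := hu.continuous_fderiv one_ne_zero
  have hφ' : Continuous fun x : ℝ => fderiv ℝ u (x, s) (1, 0) :=
    (hd.comp (by fun_prop)).clm_apply continuous_const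
  have hab : a ≤ b := hp.1.trans hp.2
  refine (vsq_sub_le_integral (φ := fun x => u (x, s)) (fun x => ?_) hφ' hp hq).trans ?_
  · exact ((hu.differentiable one_ne_zero).differentiableAt.hasFDerivAt).comp_hasDerivAt x
      ((hasDerivAt_id x).prodMk (hasDerivAt_const x s))
  · refine mul_le_mul_of_nonneg_left ?_ (sub_nonneg.2 hab)
    refine intervalIntegral.integral_mono_on hab
      ((continuous_vsq.comp hφ').intervalIntegrable _ _)
      (((continuous_gradSq hu).comp (by fun_prop)).intervalIntegrable _ _) fun x _ => ?_
    exact le_add_of_nonneg_right (vsq_nonneg _)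

theorem vsq_sub_le_vertical {u : ℝ × ℝ → ℝ × ℝ} (hu : ContDiff ℝ 1 u) (x : ℝ) {a b p q : ℝ}
    (hp : p ∈ Icc a b) (hq : q ∈ Icc a b) :
    vsq (u (x, p) - u (x, q)) ≤ (b - a) * ∫ t in a..b, gradSq u (x, t) := by
  have hd : Continuous (fderiv ℝ u) := hu.continuous_fderiv one_ne_zero
  have hφ' : Continuous fun t : ℝ => fderiv ℝ u (x, t) (0, 1) :=
    (hd.comp (by fun_prop)).clm_apply continuous_const
  have hab : a ≤ b := hp.1.trans hp.2
  refine (vsq_sub_le_integral (φ := fun t => u (x, t)) (fun t => ?_) hφ' hp hq).trans ?_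
  · exact ((hu.differentiable one_ne_zero).differentiableAt.hasFDerivAt).comp_hasDerivAt t
      ((hasDerivAt_const t x).prodMk (hasDerivAt_id t))
  · refine mul_le_mul_of_nonneg_left ?_ (sub_nonneg.2 hab)
    refine intervalIntegral.integral_mono_on hab
      ((continuous_vsq.comp hφ').intervalIntegrable _ _)
      (((continuous_gradSq hu).comp (by fun_prop)).intervalIntegrable _ _) fun t _ => ?_
    exact le_add_of_nonneg_left (vsq_nonneg _)

theorem measurableSet_layerR {ω : ℝ → ℝ} (hω : Continuous ω) : MeasurableSet (layerR ω) :=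
  (measurableSet_lt (hω.measurable.comp measurable_fst) measurable_snd).inter
    (measurableSet_lt measurable_snd measurable_const)

/-- Fubini on the layer, column by column. -/
theorem integral_layerR {ω : ℝ → ℝ} (hω : Continuous ω) (hneg : ∀ t, ω t ≤ 0)
    {F : ℝ × ℝ → ℝ} (hF : Integrable F) :
    (Integrable fun x => ∫ t in ω x..0, F (x, t)) ∧
      ∫ y in layerR ω, F y = ∫ x, ∫ t in ω x..0, F (x, t) := by
  have hi := hF.indicator (measurableSet_layerR hω)
  have hcol : ∀ x, ∫ t, (layerR ω).indicator F (x, t) = ∫ t in ω x..0, F (x, t) := fun x => by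
    rw [intervalIntegral.integral_of_le (hneg x), integral_Ioc_eq_integral_Ioo,
      ← integral_indicator measurableSet_Ioo]
    rfl
  rw [Measure.volume_eq_prod] at hi
  refine ⟨by simpa only [hcol] using hi.integral_prod_left, ?_⟩
  rw [← integral_indicator (measurableSet_layerR hω), Measure.volume_eq_prod, integral_prod _ hi]
  simp only [hcol]

/-- Control of a horizontal trace at one point by the gradient over a window. -/
theorem vsq_le_window {ω : ℝ → ℝ} {K : NNReal} (hlip : LipschitzWith K ω)
    (hval : ∀ t, ω t ∈ Ioo (-1 : ℝ) 0) {L : ℝ} (hL : 0 < L)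
    (hco : ∀ (a : ℝ) (c : ℝ × ℝ), vsq c ≤ ∫ x in a..a + L, (c.2 - c.1 * deriv ω x) ^ 2)
    {u : ℝ × ℝ → ℝ × ℝ} (hu : ContDiff ℝ 1 u) (hs : HasCompactSupport u) (ht : TangentOn ω u)
    {s : ℝ} (hsω : ∀ t, ω t ≤ s) (hs0 : s ≤ 0) (a : ℝ) :
    vsq (u (a, s)) ≤ (1 + (K : ℝ) ^ 2) *
      (2 * (∫ x in a..a + L, ∫ t in ω x..0, gradSq u (x, t)) +
        2 * L ^ 2 * ∫ x in a..a + L, gradSq u (x, s)) := by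
  set c := u (a, s) with hc
  set D : ℝ → ℝ := fun x => ∫ t in ω x..0, gradSq u (x, t) with hD
  set E := ∫ x in a..a + L, gradSq u (x, s) with hE
  have hab : a ≤ a + L := by linarith
  have hDint : Integrable D := (integral_layerR hlip.continuous (fun t => (hval t).2.le)
    ((continuous_gradSq hu).integrable_of_hasCompactSupport (hasCompactSupport_gradSq hs))).1
  have htrace : ∀ x ∈ Icc a (a + L), vsq (u (x, ω x) - c) ≤ 2 * D x + 2 * (L * E) := by
    intro x hx
    refine (vsq_sub_le _ (u (x, s)) _).trans ?_
    have hv := vsq_sub_le_vertical hu x (a := ω x) (b := 0) (p := ω x) (q := s)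
      ⟨le_rfl, (hval x).2.le⟩ ⟨hsω x, hs0⟩
    have hh := vsq_sub_le_horizontal hu s (a := a) (b := a + L) hx ⟨le_rfl, hab⟩
    have hD0 : 0 ≤ D x :=
      intervalIntegral.integral_nonneg (hval x).2.le fun t _ => gradSq_nonneg _ _
    have hv' : (0 - ω x) * D x ≤ 1 * D x := by
      gcongr; linarith [(hval x).1]
    rw [add_sub_cancel_left] at hh
    linarith
  have hdefect : ∫ x in a..a + L, (c.2 - c.1 * deriv ω x) ^ 2 ≤
      ∫ x in a..a + L, (1 + (K : ℝ) ^ 2) * (2 * D x + 2 * (L * E)) := by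
    refine intervalIntegral.integral_mono_ae_restrict hab ?_ ?_ ?_
    · have hpt : ∀ x, (c.2 - c.1 * deriv ω x) ^ 2 =
          c.2 ^ 2 - 2 * c.1 * c.2 * deriv ω x + c.1 ^ 2 * deriv ω x ^ 2 := fun x => by ring
      simp_rw [hpt]
      exact (intervalIntegrable_const.sub
        ((lipschitz_integral_deriv hlip _ _).1.const_mul _)).add
        ((intervalIntegrable_deriv_sq hlip _ _).const_mul _)
    · exact ((hDint.intervalIntegrable.const_mul 2).add intervalIntegrable_const).const_mul _
    · filter_upwards [ae_restrict_mem measurableSet_Icc, ae_restrict_of_ae ht] with x hx htx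
      refine le_trans ?_ (mul_le_mul_of_nonneg_left (htrace x hx) (by positivity))
      have hk : deriv ω x ^ 2 ≤ (K : ℝ) ^ 2 := by
        rw [← sq_abs]
        gcongr
        exact norm_deriv_le_of_lipschitz hlip
      simp only [vsq, Prod.fst_sub, Prod.snd_sub]
      set g := u (x, ω x)
      set m := deriv ω x
      have hrw : c.2 - c.1 * m = (g.1 - c.1) * m - (g.2 - c.2) := by linarith
      rw [hrw]
      calc ((g.1 - c.1) * m - (g.2 - c.2)) ^ 2
          ≤ (1 + m ^ 2) * ((g.1 - c.1) ^ 2 + (g.2 - c.2) ^ 2) := by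
            linarith [sq_nonneg ((g.1 - c.1) + m * (g.2 - c.2))]
        _ ≤ _ := by gcongr
  refine (hco a c).trans (hdefect.trans (le_of_eq ?_))
  rw [intervalIntegral.integral_const_mul, intervalIntegral.integral_add
    (hDint.intervalIntegrable.const_mul 2) intervalIntegrable_const,
    intervalIntegral.integral_const_mul, intervalIntegral.integral_const, smul_eq_mul,
    add_sub_cancel_left]
  ring

theorem integral_trace_le {ω : ℝ → ℝ} {K : NNReal} (hlip : LipschitzWith K ω)
    (hval : ∀ t, ω t ∈ Ioo (-1 : ℝ) 0) {L : ℝ} (hL : 0 < L)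
    (hco : ∀ (a : ℝ) (c : ℝ × ℝ), vsq c ≤ ∫ x in a..a + L, (c.2 - c.1 * deriv ω x) ^ 2)
    {u : ℝ × ℝ → ℝ × ℝ} (hu : ContDiff ℝ 1 u) (hs : HasCompactSupport u) (ht : TangentOn ω u)
    {s : ℝ} (hsω : ∀ t, ω t ≤ s) (hs0 : s ≤ 0) :
    ∫ a, vsq (u (a, s)) ≤ (1 + (K : ℝ) ^ 2) *
      (2 * L * (∫ y in layerR ω, gradSq u y) + 2 * L ^ 3 * ∫ x, gradSq u (x, s)) := by
  have hG := continuous_gradSq hu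
  obtain ⟨hDint, hDeq⟩ := integral_layerR hlip.continuous (fun t => (hval t).2.le)
    (hG.integrable_of_hasCompactSupport (hasCompactSupport_gradSq hs))
  have hGs : Integrable fun x => gradSq u (x, s) :=
    (hG.comp (by fun_prop : Continuous fun x : ℝ => (x, s))).integrable_of_hasCompactSupport
      (hasCompactSupport_horizontal (hasCompactSupport_gradSq hs) s)
  have hus : Integrable fun a => vsq (u (a, s)) :=
    (continuous_vsq.comp (hu.continuous.comp
      (by fun_prop : Continuous fun x : ℝ => (x, s)))).integrable_of_hasCompactSupport
      ((hasCompactSupport_horizontal hs s).comp_left (g := vsq) (by simp [vsq]))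
  obtain ⟨hi1, he1⟩ := integral_sliding_window hDint hL.le
  obtain ⟨hi2, he2⟩ := integral_sliding_window hGs hL.le
  refine (integral_mono hus (((hi1.const_mul 2).add (hi2.const_mul (2 * L ^ 2))).const_mul _)
    (vsq_le_window hlip hval hL hco hu hs ht hsω hs0)).trans (le_of_eq ?_)
  simp only [Pi.add_apply]
  rw [integral_const_mul, integral_add (hi1.const_mul 2) (hi2.const_mul (2 * L ^ 2)),
    integral_const_mul, integral_const_mul, he1, he2, hDeq]
  ring

theorem integral_layerR_le_trace {ω : ℝ → ℝ} (hω : Continuous ω)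
    (hval : ∀ t, ω t ∈ Ioo (-1 : ℝ) 0) {u : ℝ × ℝ → ℝ × ℝ} (hu : ContDiff ℝ 1 u)
    (hs : HasCompactSupport u) {s : ℝ} (hsω : ∀ t, ω t ≤ s) (hs0 : s ≤ 0) :
    ∫ y in layerR ω, vsq (u y) ≤
      2 * (∫ a, vsq (u (a, s))) + 2 * ∫ y in layerR ω, gradSq u y := by
  have hG := continuous_gradSq hu
  obtain ⟨hDint, hDeq⟩ := integral_layerR hω (fun t => (hval t).2.le)
    (hG.integrable_of_hasCompactSupport (hasCompactSupport_gradSq hs))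
  obtain ⟨hVint, hVeq⟩ := integral_layerR hω (fun t => (hval t).2.le)
    (integrable_vsq_comp hu.continuous hs)
  have hus : Integrable fun a => vsq (u (a, s)) :=
    (continuous_vsq.comp (hu.continuous.comp
      (by fun_prop : Continuous fun x : ℝ => (x, s)))).integrable_of_hasCompactSupport
      ((hasCompactSupport_horizontal hs s).comp_left (g := vsq) (by simp [vsq]))
  rw [hVeq, hDeq, ← integral_const_mul, ← integral_const_mul,
    ← integral_add (hus.const_mul 2) (hDint.const_mul 2)]
  refine integral_mono hVint ((hus.const_mul 2).add (hDint.const_mul 2)) fun x => ?_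
  have hx := hval x
  set D := ∫ t in ω x..0, gradSq u (x, t) with hD
  have hD0 : 0 ≤ D := intervalIntegral.integral_nonneg hx.2.le fun t _ => gradSq_nonneg _ _
  have hM : 0 ≤ 2 * vsq (u (x, s)) + 2 * D := by linarith [vsq_nonneg (u (x, s))]
  have hpt : ∀ t ∈ Icc (ω x) 0, vsq (u (x, t)) ≤ 2 * vsq (u (x, s)) + 2 * D := by
    intro t ht
    have h1 := vsq_sub_le (u (x, t)) (u (x, s)) 0
    have h2 := vsq_sub_le_vertical hu x ht ⟨hsω x, hs0⟩
    have h3 : (0 - ω x) * D ≤ 1 * D := by gcongr; linarith [hx.1]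
    rw [sub_zero, sub_zero] at h1
    linarith
  calc ∫ t in ω x..0, vsq (u (x, t)) ≤ ∫ _ in ω x..0, (2 * vsq (u (x, s)) + 2 * D) :=
        intervalIntegral.integral_mono_on hx.2.le
          ((continuous_vsq.comp (hu.continuous.comp
            (by fun_prop : Continuous fun t : ℝ => (x, t)))).intervalIntegrable _ _)
          intervalIntegrable_const hpt
    _ = (0 - ω x) * (2 * vsq (u (x, s)) + 2 * D) := by
        rw [intervalIntegral.integral_const, smul_eq_mul]
    _ ≤ 1 * (2 * vsq (u (x, s)) + 2 * D) := by gcongr; linarith [hx.1]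
    _ = _ := one_mul _

/-- Horizontal slices of a strip inside the layer carry at most the integral over the layer. -/
theorem integral_slices_le {ω : ℝ → ℝ} {F : ℝ × ℝ → ℝ} (hF : Integrable F)
    (hF0 : ∀ y, 0 ≤ F y) {h : ℝ} (hh : ∀ t, ω t ≤ -h) :
    IntegrableOn (fun s => ∫ x, F (x, s)) (Ioo (-h) 0) ∧
      ∫ s in Ioo (-h) 0, ∫ x, F (x, s) ≤ ∫ y in layerR ω, F y := by
  have hsub : (univ : Set ℝ) ×ˢ Ioo (-h) 0 ⊆ layerR ω := fun y hy =>
    ⟨(hh y.1).trans_lt hy.2.1, hy.2.2⟩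
  have hi : Integrable F ((volume : Measure ℝ).prod (volume.restrict (Ioo (-h) 0))) := by
    rw [← Measure.restrict_univ (μ := (volume : Measure ℝ)), Measure.prod_restrict,
      Measure.restrict_univ]
    exact hF.integrableOn
  refine ⟨hi.integral_prod_right, ?_⟩
  rw [← integral_prod_symm F hi]
  nth_rewrite 1 [← Measure.restrict_univ (μ := (volume : Measure ℝ))]
  rw [Measure.prod_restrict]
  exact setIntegral_mono_set hF.integrableOn (Eventually.of_forall hF0)
    (LE.le.eventuallyLE hsub)

/-- If `ω` is Lipschitz with values in `(−1,0)`, `sup ω < 0`, and the roughness is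
non-degenerate in the sense that `inf_{y₁} ∫₀^A ω'(y₁+t)² dt > 0` for some `A > 0`,
then the Poincaré inequality `‖u‖_{L²(R)} ≤ 𝒞 ‖∇u‖_{L²(R)}` holds for all smooth
compactly supported vector fields that are tangent to `Γ`. -/
theorem stmt0 (ω : ℝ → ℝ) (K : NNReal) (hlip : LipschitzWith K ω)
    (hval : ∀ t, ω t ∈ Set.Ioo (-1 : ℝ) 0)
    (hsup : (⨆ t : ℝ, ω t) < 0)
    (hnd : ∃ A > 0, 0 < ⨅ y₁ : ℝ, ∫ t in (0 : ℝ)..A, (deriv ω (y₁ + t)) ^ 2) :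
    ∃ C > 0, ∀ u : ℝ × ℝ → ℝ × ℝ, ContDiff ℝ (⊤ : ℕ∞) u → HasCompactSupport u →
      TangentOn ω u →
      Real.sqrt (∫ y in layerR ω, vsq (u y)) ≤
        C * Real.sqrt (∫ y in layerR ω, gradSq u y) := by
  have hω := hlip.continuous
  obtain ⟨L, hL, hco⟩ := exists_window_coercive hlip hval hnd
  set h := -⨆ t : ℝ, ω t with hh_def
  have hh : 0 < h := by linarith
  have hle : ∀ t, ω t ≤ -h := fun t => by
    rw [hh_def, neg_neg]
    exact le_ciSup ⟨0, by rintro _ ⟨y, rfl⟩; exact (hval y).2.le⟩ t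
  set M : ℝ := 1 + (K : ℝ) ^ 2 with hM_def
  have hM : 0 < M := by positivity
  set α : ℝ := 4 * M * L + 2 with hα
  set β : ℝ := 4 * M * L ^ 3 with hβ
  have hC : 0 < α + β / h := by positivity
  refine ⟨Real.sqrt (α + β / h), Real.sqrt_pos.2 hC, fun u hu hs ht => ?_⟩
  have hu1 : ContDiff ℝ 1 u := hu.of_le (by exact_mod_cast le_top)
  rw [← Real.sqrt_mul hC.le]
  refine Real.sqrt_le_sqrt ?_
  set I := ∫ y in layerR ω, vsq (u y)
  set J := ∫ y in layerR ω, gradSq u y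
  have hslice : ∀ s ∈ Ioo (-h) 0, I ≤ α * J + β * ∫ x, gradSq u (x, s) := by
    intro s hs'
    have hsω : ∀ t, ω t ≤ s := fun t => (hle t).trans hs'.1.le
    have h1 := integral_trace_le hlip hval hL hco hu1 hs ht hsω hs'.2.le
    have h2 := integral_layerR_le_trace hω hval hu1 hs hsω hs'.2.le
    rw [hα, hβ]
    linarith
  obtain ⟨hHint, hHle⟩ := integral_slices_le
    ((continuous_gradSq hu1).integrable_of_hasCompactSupport (hasCompactSupport_gradSq hs))
    (gradSq_nonneg u) hle
  have hconst : ∀ c : ℝ, IntegrableOn (fun _ : ℝ => c) (Ioo (-h) 0) := fun c =>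
    integrableOn_const (by simp)
  have hint := setIntegral_mono_on (hconst I) ((hconst (α * J)).add (hHint.const_mul β))
    measurableSet_Ioo hslice
  simp only [Pi.add_apply] at hint
  rw [integral_add (hconst _) (hHint.const_mul β), setIntegral_const, setIntegral_const,
    integral_const_mul, Real.volume_real_Ioo_of_le (by linarith), smul_eq_mul,
    smul_eq_mul] at hint
  have hβJ : β * ∫ s in Ioo (-h) 0, ∫ x, gradSq u (x, s) ≤ β * J := by gcongr
  have hfin : h * I ≤ h * ((α + β / h) * J) := by
    have : h * ((α + β / h) * J) = h * (α * J) + β * J := by field_simp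
    rw [this]; linarith
  exact le_of_mul_le_mul_left hfin hh
end
end

section
/- Let ω ≡ −1, so that R = ℝ×(−1,0), Γ = ℝ×{−1} and the inward normal is ν = (0,1). Then for every constant C > 0 there exists a smooth compactly supported vector field u : closure(R) → ℝ² with second component identically zero (hence u·ν = 0 on Γ) such that ‖u‖_{L²(R)} > C ‖∇u‖_{L²(R)}. In particular no Poincaré inequality ‖u‖_{L²(R)} ≤ C‖∇u‖_{L²(R)} can hold for all tangent fields when the lower boundary is flat. -/
open MeasureTheory Real Set Filter

noncomputable section

/-- The flat layer `R = ℝ × (−1,0)`. -/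
def flatR : Set (ℝ × ℝ) := {y : ℝ × ℝ | -1 < y.2 ∧ y.2 < 0}

theorem flatR_eq_prod : flatR = (univ : Set ℝ) ×ˢ Ioo (-1 : ℝ) 0 := by
  ext y
  simp [flatR]

theorem measurableSet_flatR : MeasurableSet flatR := by
  rw [flatR_eq_prod]
  exact MeasurableSet.univ.prod measurableSet_Ioo

/-- Integrating a function of the first variable over the flat layer of height one. -/
theorem setIntegral_flatR_comp_fst (g : ℝ → ℝ) : ∫ y in flatR, g y.1 = ∫ x, g x := by
  have h := setIntegral_prod_mul (μ := volume) (ν := volume) g (fun _ : ℝ => (1 : ℝ)) univ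
    (Ioo (-1 : ℝ) 0)
  rw [flatR_eq_prod, Measure.volume_eq_prod]
  simpa using h

/-- The horizontal field `(f (ε y₁) f (y₂), 0)`. -/
def horizontalField (f : ℝ → ℝ) (ε : ℝ) (y : ℝ × ℝ) : ℝ × ℝ := (f (ε * y.1) * f y.2, 0)

theorem contDiff_horizontalField {f : ℝ → ℝ} (hf : ContDiff ℝ (⊤ : ℕ∞) f) (ε : ℝ) :
    ContDiff ℝ (⊤ : ℕ∞) (horizontalField f ε) :=
  ((hf.comp (contDiff_const.mul contDiff_fst)).mul (hf.comp contDiff_snd)).prodMk contDiff_const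

theorem hasCompactSupport_horizontalField {f : ℝ → ℝ} (hf : HasCompactSupport f) {ε : ℝ}
    (hε : ε ≠ 0) : HasCompactSupport (horizontalField f ε) := by
  have hfε : HasCompactSupport fun x => f (ε * x) :=
    hf.comp_homeomorph (Homeomorph.mulLeft₀ ε hε)
  refine HasCompactSupport.intro (hfε.isCompact.prod hf.isCompact) fun y hy => ?_
  rw [mem_prod, not_and_or] at hy
  rcases hy with hy | hy
  · simp [horizontalField, image_eq_zero_of_notMem_tsupport hy]
  · simp [horizontalField, image_eq_zero_of_notMem_tsupport hy]

theorem gradSq_horizontalField {f : ℝ → ℝ} (hf : Differentiable ℝ f) (ε : ℝ) {y : ℝ × ℝ}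
    (h1 : f =ᶠ[nhds y.2] fun _ => 1) :
    gradSq (horizontalField f ε) y = (ε * deriv f (ε * y.1)) ^ 2 := by
  have heq : horizontalField f ε =ᶠ[nhds y] fun z => (f (ε * z.1), 0) := by
    filter_upwards [continuous_snd.continuousAt.eventually h1] with z hz
    simp [horizontalField, hz]
  have hd := (hf (ε * y.1)).hasDerivAt.comp_hasFDerivAt y
    ((hasFDerivAt_fst (𝕜 := ℝ) (p := y)).const_mul ε)
  have hd' := (hd.prodMk (hasFDerivAt_const (0 : ℝ) y)).congr_of_eventuallyEq heq
  rw [gradSq, hd'.fderiv]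
  simp [vsq]
  ring

/-- Over the flat layer `R = ℝ×(−1,0)` with lower boundary `Γ = ℝ×{−1}` and inward
normal `ν = (0,1)`, no Poincaré inequality holds for tangent fields: for every `C > 0`
there is a smooth compactly supported field `u` with vanishing second component
(hence `u·ν = 0` on `Γ`) such that `‖u‖_{L²(R)} > C ‖∇u‖_{L²(R)}`. -/
theorem stmt3 :
    ∀ C > 0, ∃ u : ℝ × ℝ → ℝ × ℝ, ContDiff ℝ (⊤ : ℕ∞) u ∧ HasCompactSupport u ∧
      (∀ y, (u y).2 = 0) ∧
      C * Real.sqrt (∫ y in flatR, gradSq u y) <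
        Real.sqrt (∫ y in flatR, vsq (u y)) := by
  intro C hC
  let f : ContDiffBump (0 : ℝ) := ⟨1, 2, one_pos, one_lt_two⟩
  have hf : ContDiff ℝ (⊤ : ℕ∞) f := f.contDiff
  have hone : ∀ y ∈ flatR, (f : ℝ → ℝ) =ᶠ[nhds y.2] fun _ => 1 := fun y hy =>
    f.eventuallyEq_one_of_mem_ball (by
      rw [mem_ball_zero_iff, Real.norm_eq_abs, abs_lt]
      exact ⟨hy.1, hy.2.trans one_pos⟩)
  set A : ℝ := ∫ x, f x ^ 2
  set B : ℝ := ∫ x, deriv f x ^ 2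
  have hApos : 0 < A := by
    refine Continuous.integral_pos_of_hasCompactSupport_nonneg_nonzero (x := 0)
      (f.continuous.pow 2) ?_ (fun x => sq_nonneg _) ?_
    · exact f.hasCompactSupport.comp_left (g := fun t : ℝ => t ^ 2) (by simp)
    · simp [f.one_of_mem_closedBall (Metric.mem_closedBall_self f.rIn_pos.le)]
  have hBnn : 0 ≤ B := integral_nonneg fun x => sq_nonneg _
  obtain ⟨ε, hε, hεAB⟩ : ∃ ε > 0, C ^ 2 * (ε ^ 2 * B) < A := by
    have hlim : Tendsto (fun ε : ℝ => C ^ 2 * (ε ^ 2 * B)) (nhdsWithin 0 (Ioi 0)) (nhds 0) := by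
      refine Tendsto.mono_left ?_ nhdsWithin_le_nhds
      exact Continuous.tendsto' (by fun_prop) _ _ (by simp)
    exact (eventually_mem_nhdsWithin.and (hlim.eventually_lt_const hApos)).exists
  refine ⟨horizontalField f ε, contDiff_horizontalField hf ε,
    hasCompactSupport_horizontalField f.hasCompactSupport hε.ne', fun _ => rfl, ?_⟩
  have hgrad : ∫ y in flatR, gradSq (horizontalField f ε) y = ε⁻¹ * (ε ^ 2 * B) := by
    rw [setIntegral_congr_fun measurableSet_flatR fun y hy =>
        gradSq_horizontalField (hf.differentiable (by simp)) ε (hone y hy),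
      setIntegral_flatR_comp_fst fun x => (ε * deriv f (ε * x)) ^ 2,
      Measure.integral_comp_mul_left (fun x => (ε * deriv f x) ^ 2) ε,
      abs_of_pos (inv_pos.2 hε), smul_eq_mul]
    simp_rw [mul_pow]
    rw [integral_const_mul]
  have hfield : ∫ y in flatR, vsq (horizontalField f ε y) = ε⁻¹ * A := by
    have hpt : ∀ y ∈ flatR, vsq (horizontalField f ε y) = f (ε * y.1) ^ 2 := fun y hy => by
      simp [vsq, horizontalField, (hone y hy).eq_of_nhds]
    rw [setIntegral_congr_fun measurableSet_flatR hpt,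
      setIntegral_flatR_comp_fst fun x => f (ε * x) ^ 2,
      Measure.integral_comp_mul_left (fun x => f x ^ 2) ε,
      abs_of_pos (inv_pos.2 hε), smul_eq_mul]
  rw [hgrad, hfield, Real.lt_sqrt (by positivity), mul_pow, Real.sq_sqrt (by positivity),
    mul_left_comm]
  exact mul_lt_mul_of_pos_left hεAB (inv_pos.2 hε)
end
end

section
/- Let v₀ : ℝ → ℝ² be bounded and continuous. Define, for y = (y₁,y₂) with y₂ > 0, v(y) := ∫_ℝ G(t, y₂) v₀(y₁−t) dt and q(y) := ∫_ℝ ∇g(t, y₂) · v₀(y₁−t) dt. Then v and q are smooth on the open upper half-plane {y₂ > 0}, they satisfy the Stokes equations −Δv + ∇q = 0 and div v = 0 there, and for every y₁ ∈ ℝ, v(y₁, y₂) → v₀(y₁) as y₂ → 0⁺. -/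
open MeasureTheory Real Set Filter

noncomputable section

/-- Action of the Stokes Poisson kernel matrix `G(t,y₂)` on a vector `w ∈ ℝ²`:
`G(y) = (2y₂/(π(y₁²+y₂²)²)) [[y₁², y₁y₂],[y₁y₂, y₂²]]`. -/
def Gker (t y₂ : ℝ) (w : ℝ × ℝ) : ℝ × ℝ :=
  (2 * y₂ / (Real.pi * (t ^ 2 + y₂ ^ 2) ^ 2)) •
    (t ^ 2 * w.1 + t * y₂ * w.2, t * y₂ * w.1 + y₂ ^ 2 * w.2)

/-- The pressure kernel `g(y) = −2y₂/(π(y₁²+y₂²))`. -/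
def gker (y : ℝ × ℝ) : ℝ := -2 * y.2 / (Real.pi * (y.1 ^ 2 + y.2 ^ 2))

/-- Partial derivative in the first variable. -/
def pd1 {E : Type*} [NormedAddCommGroup E] [NormedSpace ℝ E]
    (f : ℝ × ℝ → E) : ℝ × ℝ → E := fun y => fderiv ℝ f y (1, 0)

/-- Partial derivative in the second variable. -/
def pd2 {E : Type*} [NormedAddCommGroup E] [NormedSpace ℝ E]
    (f : ℝ × ℝ → E) : ℝ × ℝ → E := fun y => fderiv ℝ f y (0, 1)

/-- The linear form on `ℝ²` with coordinates `a`, `b`. -/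
def rowForm (a b : ℝ) : ℝ × ℝ →L[ℝ] ℝ :=
  a • ContinuousLinearMap.fst ℝ ℝ ℝ + b • ContinuousLinearMap.snd ℝ ℝ ℝ

@[simp]
theorem rowForm_apply (a b : ℝ) (w : ℝ × ℝ) : rowForm a b w = a * w.1 + b * w.2 := by
  simp [rowForm]

theorem rowForm_ext {L : ℝ × ℝ →L[ℝ] ℝ} {a b : ℝ} (ha : L (1, 0) = a) (hb : L (0, 1) = b) :
    L = rowForm a b := by
  ext <;> simp [ha, hb]

theorem norm_rowForm_le (a b : ℝ) : ‖rowForm a b‖ ≤ |a| + |b| := by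
  refine ContinuousLinearMap.opNorm_le_bound _ (by positivity) fun w => ?_
  rw [rowForm_apply, add_mul]
  refine (norm_add_le _ _).trans (add_le_add ?_ ?_)
  · rw [norm_mul]
    exact mul_le_mul_of_nonneg_left (norm_fst_le w) (abs_nonneg a)
  · rw [norm_mul]
    exact mul_le_mul_of_nonneg_left (norm_snd_le w) (abs_nonneg b)

theorem continuous_rowForm : Continuous fun p : ℝ × ℝ => rowForm p.1 p.2 := by
  unfold rowForm
  fun_prop

theorem isOpen_upperHalfPlane : IsOpen {y : ℝ × ℝ | 0 < y.2} :=
  isOpen_lt continuous_const continuous_snd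

/-- `f` has partial derivatives `f₁`, `f₂` on the upper half-plane, in the Fréchet sense. -/
def HasPartials (f f₁ f₂ : ℝ × ℝ → ℝ) : Prop :=
  ∀ y : ℝ × ℝ, 0 < y.2 → HasFDerivAt f (rowForm (f₁ y) (f₂ y)) y

namespace HasPartials

variable {f f₁ f₂ g g₁ g₂ : ℝ × ℝ → ℝ}

theorem congr_partials (h : HasPartials f f₁ f₂) (h₁ : ∀ y : ℝ × ℝ, 0 < y.2 → f₁ y = g₁ y)
    (h₂ : ∀ y : ℝ × ℝ, 0 < y.2 → f₂ y = g₂ y) : HasPartials f g₁ g₂ := fun y hy => by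
  rw [← h₁ y hy, ← h₂ y hy]
  exact h y hy

theorem add (hf : HasPartials f f₁ f₂) (hg : HasPartials g g₁ g₂) :
    HasPartials (fun y => f y + g y) (fun y => f₁ y + g₁ y) (fun y => f₂ y + g₂ y) :=
  fun y hy => ((hf y hy).add (hg y hy)).congr_fderiv (rowForm_ext (by simp) (by simp))

theorem const_mul (c : ℝ) (hf : HasPartials f f₁ f₂) :
    HasPartials (fun y => c * f y) (fun y => c * f₁ y) (fun y => c * f₂ y) :=
  fun y hy => ((hf y hy).const_mul c).congr_fderiv (rowForm_ext (by simp) (by simp))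

theorem pow_mul (n : ℕ) (hf : HasPartials f f₁ f₂) :
    HasPartials (fun y => y.2 ^ n * f y) (fun y => y.2 ^ n * f₁ y)
      (fun y => n * y.2 ^ (n - 1) * f y + y.2 ^ n * f₂ y) := fun y hy => by
  have h : HasFDerivAt (fun y : ℝ × ℝ => y.2 ^ n) _ y := (hasFDerivAt_snd (𝕜 := ℝ)).pow n
  refine (h.mul (hf y hy)).congr_fderiv (rowForm_ext ?_ ?_)
  · simp
  · simp
    ring

theorem congr (hf : HasPartials f f₁ f₂) (h : ∀ y : ℝ × ℝ, 0 < y.2 → g y = f y) :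
    HasPartials g f₁ f₂ := fun y hy =>
  (hf y hy).congr_of_eventuallyEq <|
    Filter.eventually_of_mem (isOpen_upperHalfPlane.mem_nhds hy) h

theorem pd1_eq (hf : HasPartials f f₁ f₂) {y : ℝ × ℝ} (hy : 0 < y.2) :
    pd1 f y = f₁ y := by
  simp [pd1, (hf y hy).fderiv]

theorem pd2_eq (hf : HasPartials f f₁ f₂) {y : ℝ × ℝ} (hy : 0 < y.2) : pd2 f y = f₂ y := by
  simp [pd2, (hf y hy).fderiv]

theorem hasFDerivAt_prodMk {v : ℝ × ℝ → ℝ × ℝ} (hf : HasPartials f f₁ f₂)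
    (hg : HasPartials g g₁ g₂) (hv : ∀ y : ℝ × ℝ, 0 < y.2 → v y = (f y, g y)) {y : ℝ × ℝ}
    (hy : 0 < y.2) :
    HasFDerivAt v ((rowForm (f₁ y) (f₂ y)).prod (rowForm (g₁ y) (g₂ y))) y :=
  ((hf y hy).prodMk (hg y hy)).congr_of_eventuallyEq <|
    Filter.eventually_of_mem (isOpen_upperHalfPlane.mem_nhds hy) hv

theorem pd1_prodMk {v : ℝ × ℝ → ℝ × ℝ} (hf : HasPartials f f₁ f₂) (hg : HasPartials g g₁ g₂)
    (hv : ∀ y : ℝ × ℝ, 0 < y.2 → v y = (f y, g y)) (y : ℝ × ℝ) (hy : 0 < y.2) :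
    pd1 v y = (f₁ y, g₁ y) := by
  simp [pd1, (hf.hasFDerivAt_prodMk hg hv hy).fderiv]

theorem pd2_prodMk {v : ℝ × ℝ → ℝ × ℝ} (hf : HasPartials f f₁ f₂) (hg : HasPartials g g₁ g₂)
    (hv : ∀ y : ℝ × ℝ, 0 < y.2 → v y = (f y, g y)) (y : ℝ × ℝ) (hy : 0 < y.2) :
    pd2 v y = (f₂ y, g₂ y) := by
  simp [pd2, (hf.hasFDerivAt_prodMk hg hv hy).fderiv]

end HasPartials

/-- A kernel on the upper half-plane is continuous there and, after translation,
decays like `(1 + s ^ 2)⁻¹`, locally uniformly in the base point. -/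
structure IsDecayingKernel (K : ℝ × ℝ → ℝ) : Prop where
  continuousOn : ContinuousOn K {y | 0 < y.2}
  bound : ∀ δ > 0, ∀ M : ℝ, ∃ C : ℝ, ∀ (y : ℝ × ℝ) (s : ℝ), δ ≤ y.2 → y.2 ≤ M → |y.1| ≤ M →
    |K (y.1 - s, y.2)| ≤ C * (1 + s ^ 2)⁻¹

/-- The integral of boundary data `f` against the translates of the kernel `K`. -/
def boundaryIntegral (K : ℝ × ℝ → ℝ) (f : ℝ → ℝ) (y : ℝ × ℝ) : ℝ :=
  ∫ s, K (y.1 - s, y.2) * f s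

namespace IsDecayingKernel

variable {K K₁ K₂ : ℝ × ℝ → ℝ} {f : ℝ → ℝ}

theorem add (h₁ : IsDecayingKernel K₁) (h₂ : IsDecayingKernel K₂) :
    IsDecayingKernel fun y => K₁ y + K₂ y := by
  refine ⟨h₁.continuousOn.add h₂.continuousOn, fun δ hδ M => ?_⟩
  obtain ⟨C₁, hC₁⟩ := h₁.bound δ hδ M
  obtain ⟨C₂, hC₂⟩ := h₂.bound δ hδ M
  refine ⟨C₁ + C₂, fun y s hy hM h1 => ?_⟩
  rw [add_mul]
  exact (abs_add_le _ _).trans (add_le_add (hC₁ y s hy hM h1) (hC₂ y s hy hM h1))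

theorem const_mul (c : ℝ) (h : IsDecayingKernel K) : IsDecayingKernel fun y => c * K y := by
  refine ⟨continuousOn_const.mul h.continuousOn, fun δ hδ M => ?_⟩
  obtain ⟨C, hC⟩ := h.bound δ hδ M
  refine ⟨|c| * C, fun y s hy hM h1 => ?_⟩
  rw [abs_mul, mul_assoc]
  exact mul_le_mul_of_nonneg_left (hC y s hy hM h1) (abs_nonneg c)

theorem pow_mul (n : ℕ) (h : IsDecayingKernel K) :
    IsDecayingKernel fun y => y.2 ^ n * K y := by
  refine ⟨(continuous_snd.pow n).continuousOn.mul h.continuousOn, fun δ hδ M => ?_⟩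
  obtain ⟨C, hC⟩ := h.bound δ hδ M
  refine ⟨M ^ n * C, fun y s hy hM h1 => ?_⟩
  have hy0 : 0 ≤ y.2 := hδ.le.trans hy
  rw [abs_mul, mul_assoc, abs_of_nonneg (pow_nonneg hy0 n)]
  exact mul_le_mul (pow_le_pow_left₀ hy0 hM n) (hC y s hy hM h1) (abs_nonneg _)
    (pow_nonneg (hy0.trans hM) n)

theorem continuous_translate (h : IsDecayingKernel K) {y : ℝ × ℝ} (hy : 0 < y.2) :
    Continuous fun s => K (y.1 - s, y.2) :=
  h.continuousOn.comp_continuous (by fun_prop) fun _ => hy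

theorem integrable (h : IsDecayingKernel K) (hf : Continuous f) {B : ℝ} (hB : ∀ s, |f s| ≤ B)
    {y : ℝ × ℝ} (hy : 0 < y.2) : Integrable fun s => K (y.1 - s, y.2) * f s := by
  obtain ⟨C, hC⟩ := h.bound y.2 hy (max |y.1| y.2)
  refine Integrable.mono' ((integrable_inv_one_add_sq.const_mul C).mul_const B)
    ((h.continuous_translate hy).mul hf).aestronglyMeasurable (.of_forall fun s => ?_)
  rw [norm_mul]
  have := hC y s le_rfl (le_max_right _ _) (le_max_left _ _)
  exact mul_le_mul this (hB s) (abs_nonneg _) ((abs_nonneg _).trans this)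

theorem hasPartials_boundaryIntegral (h : IsDecayingKernel K) (h₁ : IsDecayingKernel K₁)
    (h₂ : IsDecayingKernel K₂) (hK : HasPartials K K₁ K₂) (hf : Continuous f) {B : ℝ}
    (hB : ∀ s, |f s| ≤ B) :
    HasPartials (boundaryIntegral K f) (boundaryIntegral K₁ f) (boundaryIntegral K₂ f) := by
  intro y hy
  obtain ⟨C₁, hC₁⟩ := h₁.bound (y.2 / 2) (half_pos hy) (|y.1| + 2 * y.2)
  obtain ⟨C₂, hC₂⟩ := h₂.bound (y.2 / 2) (half_pos hy) (|y.1| + 2 * y.2)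
  have hball : ∀ z ∈ Metric.ball y (y.2 / 2),
      y.2 / 2 ≤ z.2 ∧ z.2 ≤ |y.1| + 2 * y.2 ∧ |z.1| ≤ |y.1| + 2 * y.2 := by
    intro z hz
    rw [Metric.mem_ball, Prod.dist_eq, max_lt_iff, Real.dist_eq, Real.dist_eq, abs_lt, abs_lt] at hz
    have := neg_abs_le y.1
    have := le_abs_self y.1
    refine ⟨by linarith, by linarith, abs_le.2 ⟨by linarith, by linarith⟩⟩
  have hrow : rowForm (boundaryIntegral K₁ f y) (boundaryIntegral K₂ f y) =
      ∫ s, rowForm (K₁ (y.1 - s, y.2) * f s) (K₂ (y.1 - s, y.2) * f s) := by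
    have i₁ := h₁.integrable hf hB hy
    have i₂ := h₂.integrable hf hB hy
    simp only [rowForm, boundaryIntegral]
    rw [integral_add (i₁.smul_const _) (i₂.smul_const _), integral_smul_const,
      integral_smul_const]
  rw [hrow]
  refine hasFDerivAt_integral_of_dominated_of_fderiv_le (μ := volume)
    (F := fun z s => K (z.1 - s, z.2) * f s)
    (F' := fun z s => rowForm (K₁ (z.1 - s, z.2) * f s) (K₂ (z.1 - s, z.2) * f s))
    (bound := fun s => (C₁ + C₂) * (1 + s ^ 2)⁻¹ * B) (Metric.ball_mem_nhds y (half_pos hy))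
    ?_ (h.integrable hf hB hy) ?_ (.of_forall fun s z hz => ?_)
    ((integrable_inv_one_add_sq.const_mul _).mul_const B) (.of_forall fun s z hz => ?_)
  · filter_upwards [isOpen_upperHalfPlane.mem_nhds hy] with z hz
    exact ((h.continuous_translate hz).mul hf).aestronglyMeasurable
  · exact (continuous_rowForm.comp (((h₁.continuous_translate hy).mul hf).prodMk
      ((h₂.continuous_translate hy).mul hf))).aestronglyMeasurable
  · obtain ⟨hz1, hz2, hz3⟩ := hball z hz
    refine (norm_rowForm_le _ _).trans ?_
    rw [abs_mul, abs_mul, ← add_mul, add_mul C₁ C₂]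
    have hle := add_le_add (hC₁ z s hz1 hz2 hz3) (hC₂ z s hz1 hz2 hz3)
    exact mul_le_mul hle (hB s) (abs_nonneg _) ((by positivity : (0 : ℝ) ≤ _ + _).trans hle)
  · have hz2 : 0 < z.2 := (half_pos hy).trans_le (hball z hz).1
    have hshift : HasFDerivAt (fun z : ℝ × ℝ => (z.1 - s, z.2))
        (ContinuousLinearMap.id ℝ (ℝ × ℝ)) z :=
      (((hasFDerivAt_fst (𝕜 := ℝ)).sub_const s).prodMk (hasFDerivAt_snd (𝕜 := ℝ))).congr_fderiv
        (by ext <;> simp)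
    have hcomp : HasFDerivAt (fun z : ℝ × ℝ => K (z.1 - s, z.2)) _ z :=
      (hK (z.1 - s, z.2) hz2).comp z hshift
    refine (hcomp.mul_const (f s)).congr_fderiv (rowForm_ext ?_ ?_) <;> simp [mul_comm]

end IsDecayingKernel

theorem boundaryIntegral_const_mul (c : ℝ) (K : ℝ × ℝ → ℝ) (f : ℝ → ℝ) :
    boundaryIntegral (fun y => c * K y) f = fun y => c * boundaryIntegral K f y := by
  funext y
  simp only [boundaryIntegral, mul_assoc, integral_const_mul]

theorem boundaryIntegral_pow_mul (n : ℕ) (K : ℝ × ℝ → ℝ) (f : ℝ → ℝ) :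
    boundaryIntegral (fun y => y.2 ^ n * K y) f = fun y => y.2 ^ n * boundaryIntegral K f y := by
  funext y
  simp only [boundaryIntegral, mul_assoc, integral_const_mul]

theorem boundaryIntegral_add {K₁ K₂ : ℝ × ℝ → ℝ} {f : ℝ → ℝ} (h₁ : IsDecayingKernel K₁)
    (h₂ : IsDecayingKernel K₂) (hf : Continuous f) {B : ℝ} (hB : ∀ s, |f s| ≤ B) {y : ℝ × ℝ}
    (hy : 0 < y.2) :
    boundaryIntegral (fun y => K₁ y + K₂ y) f y =
      boundaryIntegral K₁ f y + boundaryIntegral K₂ f y := by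
  simp only [boundaryIntegral, add_mul]
  exact integral_add (h₁.integrable hf hB hy) (h₂.integrable hf hB hy)

/-- The kernel `|y|⁻²⁽ⁿ⁺¹⁾`. -/
def evenKernel (n : ℕ) (y : ℝ × ℝ) : ℝ := ((y.1 ^ 2 + y.2 ^ 2) ^ (n + 1))⁻¹

/-- The kernel `y₁ |y|⁻²⁽ⁿ⁺²⁾`. -/
def oddKernel (n : ℕ) (y : ℝ × ℝ) : ℝ := y.1 * ((y.1 ^ 2 + y.2 ^ 2) ^ (n + 2))⁻¹

theorem hasPartials_evenKernel (n : ℕ) :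
    HasPartials (evenKernel n) (fun y => -(2 * (n + 1)) * oddKernel n y)
      (fun y => -(2 * (n + 1)) * (y.2 ^ 1 * evenKernel (n + 1) y)) := by
  intro y hy
  have hr : 0 < y.1 ^ 2 + y.2 ^ 2 := by positivity
  have hsq : HasFDerivAt (fun y : ℝ × ℝ => y.1 ^ 2 + y.2 ^ 2) _ y :=
    ((hasFDerivAt_fst (𝕜 := ℝ)).pow 2).add ((hasFDerivAt_snd (𝕜 := ℝ)).pow 2)
  have hinv := ((hasDerivAt_pow (n + 1) (y.1 ^ 2 + y.2 ^ 2)).inv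
    (pow_ne_zero _ hr.ne')).comp_hasFDerivAt y hsq
  refine hinv.congr_fderiv (rowForm_ext ?_ ?_) <;>
    simp [evenKernel, oddKernel] <;> field_simp <;> ring

theorem hasPartials_oddKernel (n : ℕ) :
    HasPartials (oddKernel n)
      (fun y => -(2 * n + 3) * evenKernel (n + 1) y +
        2 * (n + 2) * (y.2 ^ 2 * evenKernel (n + 2) y))
      (fun y => -(2 * (n + 2)) * (y.2 ^ 1 * oddKernel (n + 1) y)) := by
  intro y hy
  have hr : 0 < y.1 ^ 2 + y.2 ^ 2 := by positivity
  have h : HasFDerivAt (oddKernel n) _ y :=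
    (hasFDerivAt_fst (𝕜 := ℝ)).mul (hasPartials_evenKernel (n + 1) y hy)
  refine h.congr_fderiv (rowForm_ext ?_ ?_)
  · simp [evenKernel, oddKernel]
    field_simp
    ring
  · simp [evenKernel, oddKernel]
    ring

theorem HasPartials.continuousOn {f f₁ f₂ : ℝ × ℝ → ℝ} (h : HasPartials f f₁ f₂) :
    ContinuousOn f {y | 0 < y.2} :=
  fun y hy => (h y hy).continuousAt.continuousWithinAt

theorem one_add_sq_le_translate {δ M : ℝ} (hδ : 0 < δ) {y : ℝ × ℝ} (hy : δ ≤ y.2)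
    (hM : |y.1| ≤ M) (s : ℝ) :
    1 + s ^ 2 ≤ (2 + (1 + 2 * M ^ 2) / δ ^ 2) * ((y.1 - s) ^ 2 + y.2 ^ 2) := by
  have h1 : y.1 ^ 2 ≤ M ^ 2 := sq_le_sq' (abs_le.1 hM).1 (abs_le.1 hM).2
  have h2 : δ ^ 2 ≤ y.2 ^ 2 := pow_le_pow_left₀ hδ.le hy 2
  have h3 : 1 + 2 * M ^ 2 ≤ (1 + 2 * M ^ 2) / δ ^ 2 * ((y.1 - s) ^ 2 + y.2 ^ 2) := by
    rw [div_mul_eq_mul_div, le_div_iff₀ (by positivity)]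
    exact mul_le_mul_of_nonneg_left (by nlinarith [sq_nonneg (y.1 - s)]) (by positivity)
  nlinarith [sq_nonneg (2 * y.1 - s), sq_nonneg y.2]

theorem isDecayingKernel_evenKernel (n : ℕ) : IsDecayingKernel (evenKernel n) := by
  refine ⟨(hasPartials_evenKernel n).continuousOn, fun δ hδ M => ?_⟩
  refine ⟨((δ ^ 2) ^ n)⁻¹ * (2 + (1 + 2 * M ^ 2) / δ ^ 2), fun y s hy _ h1 => ?_⟩
  have hy0 : 0 < y.2 := hδ.trans_le hy
  have hr : 0 < (y.1 - s) ^ 2 + y.2 ^ 2 := by positivity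
  have hδr : δ ^ 2 ≤ (y.1 - s) ^ 2 + y.2 ^ 2 := by nlinarith [sq_nonneg (y.1 - s)]
  rw [evenKernel, abs_of_nonneg (by positivity), pow_succ, mul_inv, mul_assoc]
  refine mul_le_mul (inv_anti₀ (by positivity) (pow_le_pow_left₀ (by positivity) hδr n)) ?_
    (by positivity) (by positivity)
  rw [← div_eq_mul_inv, le_div_iff₀ (by positivity), inv_mul_le_iff₀ hr, mul_comm]
  exact one_add_sq_le_translate hδ hy h1 s

theorem isDecayingKernel_oddKernel (n : ℕ) : IsDecayingKernel (oddKernel n) := by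
  refine ⟨(hasPartials_oddKernel n).continuousOn, fun δ hδ M => ?_⟩
  obtain ⟨C₁, hC₁⟩ := (isDecayingKernel_evenKernel n).bound δ hδ M
  obtain ⟨C₂, hC₂⟩ := (isDecayingKernel_evenKernel (n + 1)).bound δ hδ M
  refine ⟨C₁ + C₂, fun y s hy hM h1 => ?_⟩
  rw [add_mul]
  refine le_trans ?_ (add_le_add (hC₁ y s hy hM h1) (hC₂ y s hy hM h1))
  have hy0 : 0 < y.2 := hδ.trans_le hy
  have hr : 0 < (y.1 - s) ^ 2 + y.2 ^ 2 := by positivity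
  have habs : |y.1 - s| ≤ (y.1 - s) ^ 2 + y.2 ^ 2 + 1 := by
    nlinarith [sq_abs (y.1 - s), sq_nonneg (|y.1 - s| - 1), abs_nonneg (y.1 - s)]
  simp only [evenKernel, oddKernel]
  rw [abs_mul, abs_of_nonneg (by positivity : (0 : ℝ) ≤ (((y.1 - s) ^ 2 + y.2 ^ 2) ^ (n + 2))⁻¹),
    abs_of_nonneg (by positivity : (0 : ℝ) ≤ (((y.1 - s) ^ 2 + y.2 ^ 2) ^ (n + 1))⁻¹)]
  refine (mul_le_mul_of_nonneg_right habs (by positivity)).trans_eq ?_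
  field_simp
  ring

theorem hasPartials_boundaryIntegral_evenKernel (n : ℕ) {f : ℝ → ℝ} (hf : Continuous f) {B : ℝ}
    (hB : ∀ s, |f s| ≤ B) :
    HasPartials (boundaryIntegral (evenKernel n) f)
      (fun y => -(2 * (n + 1)) * boundaryIntegral (oddKernel n) f y)
      (fun y => -(2 * (n + 1)) * (y.2 ^ 1 * boundaryIntegral (evenKernel (n + 1)) f y)) := by
  have h := (isDecayingKernel_evenKernel n).hasPartials_boundaryIntegral
    ((isDecayingKernel_oddKernel n).const_mul _)
    (((isDecayingKernel_evenKernel (n + 1)).pow_mul 1).const_mul _) (hasPartials_evenKernel n) hf hB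
  rwa [boundaryIntegral_const_mul, boundaryIntegral_const_mul, boundaryIntegral_pow_mul] at h

theorem hasPartials_boundaryIntegral_oddKernel (n : ℕ) {f : ℝ → ℝ} (hf : Continuous f) {B : ℝ}
    (hB : ∀ s, |f s| ≤ B) :
    HasPartials (boundaryIntegral (oddKernel n) f)
      (fun y => -(2 * n + 3) * boundaryIntegral (evenKernel (n + 1)) f y +
        2 * (n + 2) * (y.2 ^ 2 * boundaryIntegral (evenKernel (n + 2)) f y))
      (fun y => -(2 * (n + 2)) * (y.2 ^ 1 * boundaryIntegral (oddKernel (n + 1)) f y)) := by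
  have d₁ := (isDecayingKernel_evenKernel (n + 1)).const_mul (-(2 * n + 3) : ℝ)
  have d₂ := ((isDecayingKernel_evenKernel (n + 2)).pow_mul 2).const_mul (2 * (n + 2) : ℝ)
  have h := (isDecayingKernel_oddKernel n).hasPartials_boundaryIntegral (d₁.add d₂)
    (((isDecayingKernel_oddKernel (n + 1)).pow_mul 1).const_mul _) (hasPartials_oddKernel n) hf hB
  refine h.congr_partials (fun y hy => ?_) fun y _ => ?_
  · rw [boundaryIntegral_add d₁ d₂ hf hB hy, boundaryIntegral_const_mul,
      boundaryIntegral_const_mul, boundaryIntegral_pow_mul]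
  · rw [boundaryIntegral_const_mul, boundaryIntegral_pow_mul]

theorem HasPartials.contDiffOn_succ {f f₁ f₂ : ℝ × ℝ → ℝ} (h : HasPartials f f₁ f₂) {k : ℕ}
    (h₁ : ContDiffOn ℝ k f₁ {y | 0 < y.2}) (h₂ : ContDiffOn ℝ k f₂ {y | 0 < y.2}) :
    ContDiffOn ℝ (k + 1) f {y | 0 < y.2} := by
  refine (contDiffOn_succ_iff_hasFDerivWithinAt_of_uniqueDiffOn
    isOpen_upperHalfPlane.uniqueDiffOn).2 ⟨by simp, fun y => rowForm (f₁ y) (f₂ y), ?_,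
      fun y hy => (h y hy).hasFDerivWithinAt⟩
  exact (h₁.smul contDiffOn_const).add (h₂.smul contDiffOn_const)

theorem contDiffOn_boundaryIntegral_kernels {f : ℝ → ℝ} (hf : Continuous f) {B : ℝ}
    (hB : ∀ s, |f s| ≤ B) (k n : ℕ) :
    ContDiffOn ℝ k (boundaryIntegral (evenKernel n) f) {y | 0 < y.2} ∧
      ContDiffOn ℝ k (boundaryIntegral (oddKernel n) f) {y | 0 < y.2} := by
  induction k generalizing n with
  | zero =>
    simp only [Nat.cast_zero, contDiffOn_zero]
    exact ⟨(hasPartials_boundaryIntegral_evenKernel n hf hB).continuousOn,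
      (hasPartials_boundaryIntegral_oddKernel n hf hB).continuousOn⟩
  | succ k ih =>
    have hpow (m : ℕ) : ContDiffOn ℝ k (fun y : ℝ × ℝ => y.2 ^ m) {y | 0 < y.2} :=
      (contDiff_snd.pow m).contDiffOn
    push_cast
    exact ⟨(hasPartials_boundaryIntegral_evenKernel n hf hB).contDiffOn_succ
        (contDiffOn_const.mul (ih n).2) (contDiffOn_const.mul ((hpow 1).mul (ih (n + 1)).1)),
      (hasPartials_boundaryIntegral_oddKernel n hf hB).contDiffOn_succ
        ((contDiffOn_const.mul (ih (n + 1)).1).add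
          (contDiffOn_const.mul ((hpow 2).mul (ih (n + 2)).1)))
        (contDiffOn_const.mul ((hpow 1).mul (ih (n + 1)).2))⟩

theorem contDiffOn_boundaryIntegral_evenKernel {f : ℝ → ℝ} (hf : Continuous f) {B : ℝ}
    (hB : ∀ s, |f s| ≤ B) (n : ℕ) :
    ContDiffOn ℝ (⊤ : ℕ∞) (boundaryIntegral (evenKernel n) f) {y | 0 < y.2} :=
  contDiffOn_infty.2 fun k => (contDiffOn_boundaryIntegral_kernels hf hB k n).1

theorem contDiffOn_boundaryIntegral_oddKernel {f : ℝ → ℝ} (hf : Continuous f) {B : ℝ}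
    (hB : ∀ s, |f s| ≤ B) (n : ℕ) :
    ContDiffOn ℝ (⊤ : ℕ∞) (boundaryIntegral (oddKernel n) f) {y | 0 < y.2} :=
  contDiffOn_infty.2 fun k => (contDiffOn_boundaryIntegral_kernels hf hB k n).2

theorem Gker_eq (x : ℝ) {y : ℝ} (hy : 0 < y) (w : ℝ × ℝ) :
    Gker x y w =
      (2 / π * (y ^ 1 * (evenKernel 0 (x, y) * w.1) + -1 * (y ^ 3 * (evenKernel 1 (x, y) * w.1)) +
          y ^ 2 * (oddKernel 0 (x, y) * w.2)),
        2 / π * (y ^ 2 * (oddKernel 0 (x, y) * w.1) + y ^ 3 * (evenKernel 1 (x, y) * w.2))) := by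
  have hr : 0 < x ^ 2 + y ^ 2 := by positivity
  ext
  · simp [Gker, evenKernel, oddKernel]
    field_simp
    ring
  · simp [Gker, evenKernel, oddKernel]
    field_simp

theorem fderiv_gker_apply (x : ℝ) {y : ℝ} (hy : 0 < y) (w : ℝ × ℝ) :
    fderiv ℝ gker (x, y) w =
      2 / π * (2 * (y ^ 1 * (oddKernel 0 (x, y) * w.1)) + -1 * (evenKernel 0 (x, y) * w.2) +
        2 * (y ^ 2 * (evenKernel 1 (x, y) * w.2))) := by
  have hg : HasPartials gker _ _ :=
    (((hasPartials_evenKernel 0).pow_mul 1).const_mul (-(2 / π))).congr fun y hy => by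
      simp only [gker, evenKernel, zero_add, pow_one]
      field_simp
  rw [(hg (x, y) hy).fderiv, rowForm_apply]
  simp
  ring

section Fields

variable (f g : ℝ → ℝ)

/-- First component of the velocity with boundary data `(f, g)`. -/
def velocityFst (y : ℝ × ℝ) : ℝ :=
  2 / π * (y.2 ^ 1 * boundaryIntegral (evenKernel 0) f y +
    -1 * (y.2 ^ 3 * boundaryIntegral (evenKernel 1) f y) +
    y.2 ^ 2 * boundaryIntegral (oddKernel 0) g y)

/-- Second component of the velocity with boundary data `(f, g)`. -/
def velocitySnd (y : ℝ × ℝ) : ℝ :=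
  2 / π * (y.2 ^ 2 * boundaryIntegral (oddKernel 0) f y +
    y.2 ^ 3 * boundaryIntegral (evenKernel 1) g y)

/-- The pressure with boundary data `(f, g)`. -/
def pressure (y : ℝ × ℝ) : ℝ :=
  2 / π * (2 * (y.2 ^ 1 * boundaryIntegral (oddKernel 0) f y) +
    -1 * boundaryIntegral (evenKernel 0) g y +
    2 * (y.2 ^ 2 * boundaryIntegral (evenKernel 1) g y))

/-- The partial derivative `∂₁` of `velocityFst`. -/
def velocityFst₁ (y : ℝ × ℝ) : ℝ :=
  2 / π * (-2 * (y.2 ^ 1 * boundaryIntegral (oddKernel 0) f y) +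
    4 * (y.2 ^ 3 * boundaryIntegral (oddKernel 1) f y) +
    -3 * (y.2 ^ 2 * boundaryIntegral (evenKernel 1) g y) +
    4 * (y.2 ^ 4 * boundaryIntegral (evenKernel 2) g y))

/-- The partial derivative `∂₂` of `velocityFst`. -/
def velocityFst₂ (y : ℝ × ℝ) : ℝ :=
  2 / π * (boundaryIntegral (evenKernel 0) f y +
    -5 * (y.2 ^ 2 * boundaryIntegral (evenKernel 1) f y) +
    4 * (y.2 ^ 4 * boundaryIntegral (evenKernel 2) f y) +
    2 * (y.2 ^ 1 * boundaryIntegral (oddKernel 0) g y) +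
    -4 * (y.2 ^ 3 * boundaryIntegral (oddKernel 1) g y))

/-- The partial derivative `∂₁` of `velocitySnd`. -/
def velocitySnd₁ (y : ℝ × ℝ) : ℝ :=
  2 / π * (-3 * (y.2 ^ 2 * boundaryIntegral (evenKernel 1) f y) +
    4 * (y.2 ^ 4 * boundaryIntegral (evenKernel 2) f y) +
    -4 * (y.2 ^ 3 * boundaryIntegral (oddKernel 1) g y))

end Fields

theorem hasPartials_velocityFst {f g : ℝ → ℝ} (hf : Continuous f) (hg : Continuous g) {B : ℝ}
    (hfB : ∀ s, |f s| ≤ B) (hgB : ∀ s, |g s| ≤ B) :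
    HasPartials (velocityFst f g) (velocityFst₁ f g) (velocityFst₂ f g) := by
  have hfE (n : ℕ) := hasPartials_boundaryIntegral_evenKernel n hf hfB
  have hgO (n : ℕ) := hasPartials_boundaryIntegral_oddKernel n hg hgB
  have h : HasPartials (velocityFst f g) _ _ :=
    ((((hfE 0).pow_mul 1).add (((hfE 1).pow_mul 3).const_mul (-1))).add
      ((hgO 0).pow_mul 2)).const_mul (2 / π)
  refine h.congr_partials (fun y _ => ?_) fun y _ => ?_
  all_goals
    simp [velocityFst₁, velocityFst₂]
    ring

theorem hasPartials_velocitySnd {f g : ℝ → ℝ} (hf : Continuous f) (hg : Continuous g) {B : ℝ}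
    (hfB : ∀ s, |f s| ≤ B) (hgB : ∀ s, |g s| ≤ B) :
    HasPartials (velocitySnd f g) (velocitySnd₁ f g) fun y => -velocityFst₁ f g y := by
  have hfO (n : ℕ) := hasPartials_boundaryIntegral_oddKernel n hf hfB
  have hgE (n : ℕ) := hasPartials_boundaryIntegral_evenKernel n hg hgB
  have h : HasPartials (velocitySnd f g) _ _ :=
    (((hfO 0).pow_mul 2).add ((hgE 1).pow_mul 3)).const_mul (2 / π)
  refine h.congr_partials (fun y _ => ?_) fun y _ => ?_
  all_goals
    simp [velocityFst₁, velocitySnd₁]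
    ring

theorem stokes_system {f g : ℝ → ℝ} (hf : Continuous f) (hg : Continuous g) {B : ℝ}
    (hfB : ∀ s, |f s| ≤ B) (hgB : ∀ s, |g s| ≤ B)
    {v : ℝ × ℝ → ℝ × ℝ} {q : ℝ × ℝ → ℝ}
    (hv : ∀ y : ℝ × ℝ, 0 < y.2 → v y = (velocityFst f g y, velocitySnd f g y))
    (hq : ∀ y : ℝ × ℝ, 0 < y.2 → q y = pressure f g y) {y : ℝ × ℝ} (hy : 0 < y.2) :
    -(pd1 (pd1 v) y + pd2 (pd2 v) y) + (pd1 q y, pd2 q y) = 0 ∧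
      (pd1 v y).1 + (pd2 v y).2 = 0 := by
  have hfE (n : ℕ) := hasPartials_boundaryIntegral_evenKernel n hf hfB
  have hfO (n : ℕ) := hasPartials_boundaryIntegral_oddKernel n hf hfB
  have hgE (n : ℕ) := hasPartials_boundaryIntegral_evenKernel n hg hgB
  have hgO (n : ℕ) := hasPartials_boundaryIntegral_oddKernel n hg hgB
  have hu := hasPartials_velocityFst hf hg hfB hgB
  have hw := hasPartials_velocitySnd hf hg hfB hgB
  have hu₁ : HasPartials (velocityFst₁ f g) _ _ :=
    ((((((hfO 0).pow_mul 1).const_mul (-2)).add (((hfO 1).pow_mul 3).const_mul 4)).add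
      (((hgE 1).pow_mul 2).const_mul (-3))).add (((hgE 2).pow_mul 4).const_mul 4)).const_mul (2 / π)
  have hu₂ : HasPartials (velocityFst₂ f g) _ _ :=
    (((((hfE 0).add (((hfE 1).pow_mul 2).const_mul (-5))).add
      (((hfE 2).pow_mul 4).const_mul 4)).add (((hgO 0).pow_mul 1).const_mul 2)).add
      (((hgO 1).pow_mul 3).const_mul (-4))).const_mul (2 / π)
  have hw₁ : HasPartials (velocitySnd₁ f g) _ _ :=
    (((((hfE 1).pow_mul 2).const_mul (-3)).add (((hfE 2).pow_mul 4).const_mul 4)).add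
      (((hgO 1).pow_mul 3).const_mul (-4))).const_mul (2 / π)
  have hp : HasPartials (pressure f g) _ _ :=
    (((((hfO 0).pow_mul 1).const_mul 2).add ((hgE 0).const_mul (-1))).add
      (((hgE 1).pow_mul 2).const_mul 2)).const_mul (2 / π)
  have hw₂ : HasPartials (fun y => -velocityFst₁ f g y) _ _ :=
    (hu₁.const_mul (-1)).congr fun y _ => (neg_one_mul _).symm
  have hv₁ := hu.pd1_prodMk hw hv
  have hv₂ := hu.pd2_prodMk hw hv
  have hq' := hp.congr hq
  rw [hv₁ y hy, hv₂ y hy, hu₁.pd1_prodMk hw₁ hv₁ y hy, hu₂.pd2_prodMk hw₂ hv₂ y hy, hq'.pd1_eq hy,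
    hq'.pd2_eq hy]
  refine ⟨Prod.ext ?_ ?_, add_neg_cancel _⟩ <;> simp <;> ring

theorem contDiffOn_fields {f g : ℝ → ℝ} (hf : Continuous f) (hg : Continuous g) {B : ℝ}
    (hfB : ∀ s, |f s| ≤ B) (hgB : ∀ s, |g s| ≤ B) :
    ContDiffOn ℝ (⊤ : ℕ∞) (velocityFst f g) {y | 0 < y.2} ∧
      ContDiffOn ℝ (⊤ : ℕ∞) (velocitySnd f g) {y | 0 < y.2} ∧
      ContDiffOn ℝ (⊤ : ℕ∞) (pressure f g) {y | 0 < y.2} := by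
  have hpow (m : ℕ) : ContDiffOn ℝ (⊤ : ℕ∞) (fun y : ℝ × ℝ => y.2 ^ m) {y | 0 < y.2} :=
    (contDiff_snd.pow m).contDiffOn
  have hfe := contDiffOn_boundaryIntegral_evenKernel hf hfB
  have hfo := contDiffOn_boundaryIntegral_oddKernel hf hfB
  have hge := contDiffOn_boundaryIntegral_evenKernel hg hgB
  have hgo := contDiffOn_boundaryIntegral_oddKernel hg hgB
  refine ⟨contDiffOn_const.mul ?_, contDiffOn_const.mul ?_, contDiffOn_const.mul ?_⟩
  · exact (((hpow 1).mul (hfe 0)).add (contDiffOn_const.mul ((hpow 3).mul (hfe 1)))).add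
      ((hpow 2).mul (hgo 0))
  · exact ((hpow 2).mul (hfo 0)).add ((hpow 3).mul (hge 1))
  · exact ((contDiffOn_const.mul ((hpow 1).mul (hfo 0))).add (contDiffOn_const.mul (hge 0))).add
      (contDiffOn_const.mul ((hpow 2).mul (hge 1)))

theorem integral_Gker_eq {v₀ : ℝ → ℝ × ℝ} (hcont : Continuous v₀) {B : ℝ}
    (hB : ∀ t, ‖v₀ t‖ ≤ B) {y : ℝ × ℝ} (hy : 0 < y.2) :
    ∫ t, Gker t y.2 (v₀ (y.1 - t)) =
      (velocityFst (fun t => (v₀ t).1) (fun t => (v₀ t).2) y,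
        velocitySnd (fun t => (v₀ t).1) (fun t => (v₀ t).2) y) := by
  have hf : Continuous fun t => (v₀ t).1 := hcont.fst
  have hg : Continuous fun t => (v₀ t).2 := hcont.snd
  have hfB (t : ℝ) : |(v₀ t).1| ≤ B := (norm_fst_le _).trans (hB t)
  have hgB (t : ℝ) : |(v₀ t).2| ≤ B := (norm_snd_le _).trans (hB t)
  have hfe (n : ℕ) := (isDecayingKernel_evenKernel n).integrable hf hfB hy
  have hfo (n : ℕ) := (isDecayingKernel_oddKernel n).integrable hf hfB hy
  have hge (n : ℕ) := (isDecayingKernel_evenKernel n).integrable hg hgB hy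
  have hgo (n : ℕ) := (isDecayingKernel_oddKernel n).integrable hg hgB hy
  have hsub := integral_sub_left_eq_self (fun s => Gker (y.1 - s) y.2 (v₀ s)) volume y.1
  simp only [sub_sub_cancel] at hsub
  rw [hsub]
  simp only [Gker_eq _ hy]
  have i₁ := (hfe 0).const_mul (y.2 ^ 1)
  have i₂ := ((hfe 1).const_mul (y.2 ^ 3)).const_mul (-1)
  have i₃ := (hgo 0).const_mul (y.2 ^ 2)
  have j₁ := (hfo 0).const_mul (y.2 ^ 2)
  have j₂ := (hge 1).const_mul (y.2 ^ 3)
  rw [integral_pair (((i₁.fun_add i₂).fun_add i₃).const_mul _) ((j₁.fun_add j₂).const_mul _)]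
  simp only [velocityFst, velocitySnd, boundaryIntegral]
  rw [integral_const_mul, integral_const_mul, integral_add (i₁.fun_add i₂) i₃, integral_add i₁ i₂,
    integral_add j₁ j₂]
  simp only [integral_const_mul]

theorem integral_fderiv_gker_eq {v₀ : ℝ → ℝ × ℝ} (hcont : Continuous v₀) {B : ℝ}
    (hB : ∀ t, ‖v₀ t‖ ≤ B) {y : ℝ × ℝ} (hy : 0 < y.2) :
    ∫ t, fderiv ℝ gker (t, y.2) (v₀ (y.1 - t)) =
      pressure (fun t => (v₀ t).1) (fun t => (v₀ t).2) y := by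
  have hf : Continuous fun t => (v₀ t).1 := hcont.fst
  have hg : Continuous fun t => (v₀ t).2 := hcont.snd
  have hfB (t : ℝ) : |(v₀ t).1| ≤ B := (norm_fst_le _).trans (hB t)
  have hgB (t : ℝ) : |(v₀ t).2| ≤ B := (norm_snd_le _).trans (hB t)
  have hfo (n : ℕ) := (isDecayingKernel_oddKernel n).integrable hf hfB hy
  have hge (n : ℕ) := (isDecayingKernel_evenKernel n).integrable hg hgB hy
  have hsub := integral_sub_left_eq_self (fun s => fderiv ℝ gker (y.1 - s, y.2) (v₀ s)) volume y.1
  simp only [sub_sub_cancel] at hsub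
  rw [hsub]
  simp only [fderiv_gker_apply _ hy]
  have i₁ := ((hfo 0).const_mul (y.2 ^ 1)).const_mul 2
  have i₂ := (hge 0).const_mul (-1)
  have i₃ := ((hge 1).const_mul (y.2 ^ 2)).const_mul 2
  simp only [pressure, boundaryIntegral]
  rw [integral_const_mul, integral_add (i₁.fun_add i₂) i₃, integral_add i₁ i₂]
  simp only [integral_const_mul]

theorem norm_Gker_one_le (t : ℝ) (w : ℝ × ℝ) :
    ‖Gker t 1 w‖ ≤ 4 / π * ‖w‖ * (1 + t ^ 2)⁻¹ := by
  have h1 : |w.1| ≤ ‖w‖ := norm_fst_le w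
  have h2 : |w.2| ≤ ‖w‖ := norm_snd_le w
  have ht : |t| ≤ 1 + t ^ 2 := by nlinarith [sq_abs t, sq_nonneg (|t| - 1), abs_nonneg t]
  have hw : ‖(t ^ 2 * w.1 + t * 1 * w.2, t * 1 * w.1 + 1 ^ 2 * w.2)‖ ≤
      2 * (1 + t ^ 2) * ‖w‖ := by
    rw [two_mul, add_mul]
    refine max_le ((norm_add_le _ _).trans (add_le_add ?_ ?_))
      ((norm_add_le _ _).trans (add_le_add ?_ ?_)) <;>
    · rw [Real.norm_eq_abs, abs_mul]
      refine mul_le_mul ?_ ‹_› (abs_nonneg _) (by positivity)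
      simp [ht, sq_nonneg]
  rw [Gker, norm_smul, Real.norm_of_nonneg (by positivity)]
  refine (mul_le_mul_of_nonneg_left hw (by positivity)).trans_eq ?_
  field_simp
  ring

theorem Continuous.Gker_one {X : Type*} [TopologicalSpace X] {u : X → ℝ} {w : X → ℝ × ℝ}
    (hu : Continuous u) (hw : Continuous w) : Continuous fun a => Gker (u a) 1 (w a) := by
  simp only [Gker]
  apply Continuous.fun_smul
  · exact Continuous.div (by fun_prop) (by fun_prop) fun a => by positivity
  · fun_prop

theorem tendsto_inv_one_add_sq_cocompact :
    Tendsto (fun t : ℝ => (1 + t ^ 2)⁻¹) (cocompact ℝ) (nhds 0) := by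
  refine tendsto_inv_atTop_zero.comp (tendsto_atTop_mono (fun t => ?_)
    (tendsto_norm_cocompact_atTop (E := ℝ)))
  rw [Real.norm_eq_abs]
  nlinarith [sq_abs t, sq_nonneg (|t| - 1), abs_nonneg t]

theorem tendsto_mul_inv_one_add_sq_cocompact :
    Tendsto (fun t : ℝ => t * (1 + t ^ 2)⁻¹) (cocompact ℝ) (nhds 0) := by
  refine squeeze_zero_norm (fun t => ?_)
    (tendsto_inv_atTop_zero.comp (tendsto_norm_cocompact_atTop (E := ℝ)))
  rcases eq_or_ne t 0 with rfl | ht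
  · simp
  · have hpos : 0 < |t| := abs_pos.2 ht
    rw [norm_mul, Real.norm_eq_abs, norm_inv, Real.norm_of_nonneg (by positivity),
      Function.comp_apply, Real.norm_eq_abs, ← div_eq_mul_inv, div_le_iff₀ (by positivity),
      le_inv_mul_iff₀ hpos]
    nlinarith [sq_abs t]

/-- A primitive of `t ↦ Gker t 1 w`. -/
def GkerPrimitive (w : ℝ × ℝ) (t : ℝ) : ℝ × ℝ :=
  (1 / π * ((arctan t - t * (1 + t ^ 2)⁻¹) * w.1 - (1 + t ^ 2)⁻¹ * w.2),
    1 / π * ((arctan t + t * (1 + t ^ 2)⁻¹) * w.2 - (1 + t ^ 2)⁻¹ * w.1))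

theorem hasDerivAt_GkerPrimitive (w : ℝ × ℝ) (t : ℝ) :
    HasDerivAt (GkerPrimitive w) (Gker t 1 w) t := by
  have hr : 0 < 1 + t ^ 2 := by positivity
  have hinv : HasDerivAt (fun t : ℝ => (1 + t ^ 2)⁻¹) (-(2 * t) / (1 + t ^ 2) ^ 2) t := by
    simpa using ((hasDerivAt_pow 2 t).const_add 1).fun_inv hr.ne'
  have hmul := (hasDerivAt_id t).mul hinv
  have h := ((((hasDerivAt_arctan t).sub hmul).mul_const w.1).sub (hinv.mul_const w.2)).const_mul
    (1 / π) |>.prodMk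
      (((((hasDerivAt_arctan t).add hmul).mul_const w.2).sub (hinv.mul_const w.1)).const_mul
        (1 / π))
  refine h.congr_deriv ?_
  have hr' : 0 < t ^ 2 + 1 := by positivity
  ext
  all_goals
    simp [Gker]
    field_simp
    ring

theorem tendsto_GkerPrimitive (w : ℝ × ℝ) {l : Filter ℝ} (hl : l ≤ cocompact ℝ) {a : ℝ}
    (ha : Tendsto arctan l (nhds a)) :
    Tendsto (GkerPrimitive w) l (nhds ((a / π) • w)) := by
  have h₁ := tendsto_inv_one_add_sq_cocompact.mono_left hl
  have h₂ := tendsto_mul_inv_one_add_sq_cocompact.mono_left hl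
  have h := ((((ha.sub h₂).mul_const w.1).sub (h₁.mul_const w.2)).const_mul (1 / π)).prodMk_nhds
    ((((ha.add h₂).mul_const w.2).sub (h₁.mul_const w.1)).const_mul (1 / π))
  have hlim : (a / π) • w =
      (1 / π * ((a - 0) * w.1 - 0 * w.2), 1 / π * ((a + 0) * w.2 - 0 * w.1)) := by
    ext <;> simp <;> ring
  exact hlim ▸ h

theorem integral_Gker_one (w : ℝ × ℝ) : ∫ t, Gker t 1 w = w := by
  have hG : Integrable fun t => Gker t 1 w :=
    (integrable_inv_one_add_sq.const_mul _).mono'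
      (continuous_id.Gker_one continuous_const).aestronglyMeasurable
      (.of_forall fun t => norm_Gker_one_le t w)
  rw [integral_of_hasDerivAt_of_tendsto (hasDerivAt_GkerPrimitive w) hG
    (tendsto_GkerPrimitive w atBot_le_cocompact
      (tendsto_arctan_atBot.mono_right nhdsWithin_le_nhds))
    (tendsto_GkerPrimitive w atTop_le_cocompact
      (tendsto_arctan_atTop.mono_right nhdsWithin_le_nhds)),
    ← sub_smul]
  convert one_smul ℝ w using 2
  field_simp
  ring

theorem integral_Gker_rescale (v₀ : ℝ → ℝ × ℝ) (x : ℝ) {y : ℝ} (hy : 0 < y) :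
    ∫ t, Gker t y (v₀ (x - t)) = ∫ t, Gker t 1 (v₀ (x - y * t)) := by
  have h := Measure.integral_comp_mul_left (fun t => Gker t y (v₀ (x - t))) y
  rw [abs_of_pos (inv_pos.2 hy)] at h
  rw [← smul_inv_smul₀ hy.ne' (∫ t, Gker t y (v₀ (x - t))), ← h, ← integral_smul]
  congr 1
  funext t
  have ht : 0 < t ^ 2 + 1 ^ 2 := by positivity
  ext <;> simp [Gker] <;> field_simp

theorem tendsto_integral_Gker {v₀ : ℝ → ℝ × ℝ} (hcont : Continuous v₀) {B : ℝ}
    (hB : ∀ t, ‖v₀ t‖ ≤ B) (x : ℝ) :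
    Tendsto (fun y : ℝ => ∫ t, Gker t y (v₀ (x - t))) (nhdsWithin 0 (Set.Ioi 0))
      (nhds (v₀ x)) := by
  have hlim : Tendsto (fun y : ℝ => ∫ t, Gker t 1 (v₀ (x - y * t))) (nhdsWithin 0 (Set.Ioi 0))
      (nhds (∫ t, Gker t 1 (v₀ x))) := by
    refine tendsto_integral_filter_of_dominated_convergence (fun t => 4 / π * B * (1 + t ^ 2)⁻¹)
      (.of_forall fun y => ?_) (.of_forall fun y => .of_forall fun t => ?_)
      (integrable_inv_one_add_sq.const_mul _) (.of_forall fun t => ?_)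
    · exact (continuous_id.Gker_one (by fun_prop)).aestronglyMeasurable
    · refine (norm_Gker_one_le _ _).trans ?_
      gcongr
      exact hB _
    · have hc : Continuous fun y : ℝ => Gker t 1 (v₀ (x - y * t)) :=
        continuous_const.Gker_one (by fun_prop)
      simpa using (hc.tendsto 0).mono_left nhdsWithin_le_nhds
  rw [integral_Gker_one] at hlim
  refine hlim.congr' ?_
  filter_upwards [self_mem_nhdsWithin] with y hy
  exact (integral_Gker_rescale v₀ x hy).symm

/-- For bounded continuous boundary data `v₀`, the fields
`v(y) = ∫_ℝ G(t,y₂) v₀(y₁−t) dt` and `q(y) = ∫_ℝ ∇g(t,y₂)·v₀(y₁−t) dt` are smooth on the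
open upper half-plane, solve the Stokes equations `−Δv + ∇q = 0`, `div v = 0` there, and
`v(y₁,y₂) → v₀(y₁)` as `y₂ → 0⁺` for every `y₁`. -/
theorem stmt12 (v₀ : ℝ → ℝ × ℝ) (hcont : Continuous v₀)
    (hbd : ∃ C : ℝ, ∀ t, ‖v₀ t‖ ≤ C)
    (v : ℝ × ℝ → ℝ × ℝ) (hv : ∀ y : ℝ × ℝ, v y = ∫ t : ℝ, Gker t y.2 (v₀ (y.1 - t)))
    (q : ℝ × ℝ → ℝ)
    (hq : ∀ y : ℝ × ℝ, q y = ∫ t : ℝ, fderiv ℝ gker (t, y.2) (v₀ (y.1 - t))) :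
    ContDiffOn ℝ (⊤ : ℕ∞) v {y : ℝ × ℝ | 0 < y.2} ∧
    ContDiffOn ℝ (⊤ : ℕ∞) q {y : ℝ × ℝ | 0 < y.2} ∧
    (∀ y : ℝ × ℝ, 0 < y.2 →
      -(pd1 (pd1 v) y + pd2 (pd2 v) y) + (pd1 q y, pd2 q y) = 0 ∧
      (pd1 v y).1 + (pd2 v y).2 = 0) ∧
    (∀ y₁ : ℝ, Tendsto (fun y₂ : ℝ => v (y₁, y₂)) (nhdsWithin 0 (Set.Ioi 0))
      (nhds (v₀ y₁))) := by
  obtain ⟨B, hB⟩ := hbd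
  have hfB (t : ℝ) : |(v₀ t).1| ≤ B := (norm_fst_le _).trans (hB t)
  have hgB (t : ℝ) : |(v₀ t).2| ≤ B := (norm_snd_le _).trans (hB t)
  have hv' (y : ℝ × ℝ) (hy : 0 < y.2) := (hv y).trans (integral_Gker_eq hcont hB hy)
  have hq' (y : ℝ × ℝ) (hy : 0 < y.2) := (hq y).trans (integral_fderiv_gker_eq hcont hB hy)
  obtain ⟨hu, hw, hp⟩ := contDiffOn_fields hcont.fst hcont.snd hfB hgB
  refine ⟨(hu.prodMk hw).congr hv', hp.congr hq',
    fun y hy => stokes_system hcont.fst hcont.snd hfB hgB hv' hq' hy, fun y₁ => ?_⟩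
  simpa only [hv] using tendsto_integral_Gker hcont hB y₁
end
end

section
/- Let v₀ : ℝ → ℝ² be bounded measurable and α ∈ ℝ² be such that (1/y₁)∫₀^{y₁} (v₀(−z) − α) dz → 0 as |y₁| → ∞. Define v on the upper half-plane by v(y) := ∫_ℝ G(t, y₂) v₀(y₁−t) dt. Then for every integer k ≥ 1 and every δ > 0 there exists C_δ > 0 such that |y₂^k ∂_{y₁}^k v(0, y₂)| ≤ δ + C_δ/y₂ for all y₂ > 0; consequently y₂^k ∂_{y₁}^k v(0, y₂) → 0 as y₂ → ∞. -/
open MeasureTheory Real Set Filter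

noncomputable section

/-- The operator `∂₁` on vector-valued maps (used for iteration). -/
def pdOp1 (f : ℝ × ℝ → ℝ × ℝ) : ℝ × ℝ → ℝ × ℝ :=
  fun y => fderiv ℝ f y (1, 0)

/-- A sequence of functions, each the derivative of the previous one, whose `j`-th member decays
like `|s| ^ (-2 - j)`. -/
structure IsDecayingDerivSeq (H : ℕ → ℝ → ℝ) : Prop where
  hasDerivAt : ∀ j s, HasDerivAt (H j) (H (j + 1) s) s
  bound : ∀ j, ∃ C, 0 ≤ C ∧ ∀ s, |H j s| * (1 + |s|) ^ j ≤ C * (1 + s ^ 2)⁻¹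

open Polynomial in
/-- Numerators of the iterated derivatives of `P / (1 + s ^ 2) ^ 2`. -/
def derivNumerator (P : ℝ[X]) : ℕ → ℝ[X]
  | 0 => P
  | j + 1 => derivative (derivNumerator P j) * (1 + X ^ 2)
      - C (2 * (j + 2 : ℝ)) * X * derivNumerator P j

open Polynomial in
lemma natDegree_derivNumerator_le {P : ℝ[X]} (hP : P.natDegree ≤ 2) (j : ℕ) :
    (derivNumerator P j).natDegree ≤ 2 + j := by
  induction j with
  | zero => simpa [derivNumerator] using hP
  | succ j ih =>
    rw [derivNumerator]
    refine (natDegree_sub_le _ _).trans (max_le ?_ ?_)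
    · refine natDegree_mul_le.trans ?_
      have h1 := natDegree_derivative_le (derivNumerator P j)
      have h2 : (1 + X ^ 2 : ℝ[X]).natDegree ≤ 2 := by compute_degree
      omega
    · refine natDegree_mul_le.trans ?_
      have h2 : (C (2 * (j + 2 : ℝ)) * X : ℝ[X]).natDegree ≤ 1 := by compute_degree
      omega

open Polynomial in
lemma exists_abs_eval_le (P : ℝ[X]) {n : ℕ} (hn : P.natDegree ≤ n) :
    ∃ C, 0 ≤ C ∧ ∀ s : ℝ, |P.eval s| ≤ C * (1 + |s|) ^ n := by
  refine ⟨∑ i ∈ Finset.range (P.natDegree + 1), |P.coeff i|, by positivity, fun s => ?_⟩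
  rw [eval_eq_sum_range, Finset.sum_mul]
  refine (Finset.abs_sum_le_sum_abs _ _).trans (Finset.sum_le_sum fun i hi => ?_)
  rw [abs_mul, abs_pow]
  gcongr
  have hi' : i ≤ n := by simp at hi; omega
  calc |s| ^ i ≤ (1 + |s|) ^ i := by gcongr; linarith
    _ ≤ (1 + |s|) ^ n := pow_le_pow_right₀ (by linarith [abs_nonneg s]) hi'

open Polynomial in
lemma isDecayingDerivSeq_derivNumerator {P : ℝ[X]} (hP : P.natDegree ≤ 2) :
    IsDecayingDerivSeq fun j s => (derivNumerator P j).eval s / (1 + s ^ 2) ^ (j + 2) where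
  hasDerivAt j s := by
    have h0 : (1 + s ^ 2) ≠ 0 := by positivity
    have h1 := (derivNumerator P j).hasDerivAt s
    have h2 : HasDerivAt (fun s : ℝ => 1 + s ^ 2) (2 * s) s := by
      simpa using (hasDerivAt_pow 2 s).const_add 1
    refine (h1.div (h2.pow (j + 2)) (pow_ne_zero _ h0)).congr_deriv ?_
    simp only [derivNumerator, eval_sub, eval_mul, eval_add, eval_one, eval_pow, eval_X, eval_C,
      Pi.pow_apply, show j + 2 - 1 = j + 1 by omega]
    push_cast
    field_simp
    ring
  bound j := by
    obtain ⟨C, hC, h⟩ := exists_abs_eval_le _ (natDegree_derivNumerator_le hP j)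
    refine ⟨C * 2 ^ (j + 1), by positivity, fun s => ?_⟩
    have h0 : 0 < 1 + s ^ 2 := by positivity
    have h3 : (1 + |s|) ^ 2 ≤ 2 * (1 + s ^ 2) := by
      nlinarith [sq_nonneg (1 - |s|), sq_abs s]
    rw [abs_div, abs_of_pos (pow_pos h0 _), div_mul_eq_mul_div, div_le_iff₀ (pow_pos h0 _)]
    calc |(derivNumerator P j).eval s| * (1 + |s|) ^ j
        ≤ C * (1 + |s|) ^ (2 + j) * (1 + |s|) ^ j := by gcongr; exact h s
      _ = C * ((1 + |s|) ^ 2) ^ (j + 1) := by rw [← pow_mul]; ring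
      _ ≤ C * (2 * (1 + s ^ 2)) ^ (j + 1) := by gcongr
      _ = _ := by rw [mul_pow, pow_succ (1 + s ^ 2) (j + 1)]; field_simp

namespace IsDecayingDerivSeq

variable {H : ℕ → ℝ → ℝ}

lemma continuous (hH : IsDecayingDerivSeq H) (j : ℕ) : Continuous (H j) :=
  continuous_iff_continuousAt.2 fun s => (hH.hasDerivAt j s).continuousAt

lemma exists_abs_le (hH : IsDecayingDerivSeq H) (j : ℕ) :
    ∃ C, 0 ≤ C ∧ ∀ s, |H j s| ≤ C * (1 + s ^ 2)⁻¹ := by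
  obtain ⟨C, hC, h⟩ := hH.bound j
  refine ⟨C, hC, fun s => le_trans ?_ (h s)⟩
  exact le_mul_of_one_le_right (abs_nonneg _) (one_le_pow₀ (by linarith [abs_nonneg s]))

lemma exists_abs_succ_mul_le (hH : IsDecayingDerivSeq H) (j : ℕ) :
    ∃ C, 0 ≤ C ∧ ∀ s, |H (j + 1) s| * (1 + |s|) ≤ C * (1 + s ^ 2)⁻¹ := by
  obtain ⟨C, hC, h⟩ := hH.bound (j + 1)
  refine ⟨C, hC, fun s => le_trans ?_ (h s)⟩
  gcongr
  exact le_self_pow₀ (by linarith [abs_nonneg s]) (by omega)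

lemma integrable_comp_mul (hH : IsDecayingDerivSeq H) (j : ℕ) {a : ℝ → ℝ} (ha : Measurable a)
    {M : ℝ} (hM : ∀ s, |a s| ≤ M) (x : ℝ) {y : ℝ} (hy : 0 < y) :
    Integrable fun s => H j ((x - s) / y) * a s := by
  obtain ⟨C, hC, h⟩ := hH.exists_abs_le j
  have hi : Integrable fun s : ℝ => (1 + ((x - s) / y) ^ 2)⁻¹ :=
    (integrable_inv_one_add_sq.comp_div hy.ne').comp_sub_left x
  refine (hi.const_mul (C * M)).mono' ?_ (ae_of_all _ fun s => ?_)
  · exact (((hH.continuous j).measurable.comp (by fun_prop)).mul ha).aestronglyMeasurable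
  · rw [norm_mul, Real.norm_eq_abs, Real.norm_eq_abs, mul_right_comm]
    exact mul_le_mul (h _) (hM s) (abs_nonneg _) (by positivity)

/-- The convolution with a dilated kernel is differentiable in the upper half-plane. -/
lemma exists_hasFDerivAt_integral (hH : IsDecayingDerivSeq H) (j : ℕ) {a : ℝ → ℝ}
    (ha : Measurable a) {M : ℝ} (hM : ∀ s, |a s| ≤ M) {p : ℝ × ℝ} (hp : 0 < p.2) :
    ∃ L : ℝ × ℝ →L[ℝ] ℝ,
      HasFDerivAt (fun q : ℝ × ℝ => ∫ s, H j ((q.1 - s) / q.2) * a s) L p ∧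
      L (1, 0) = p.2⁻¹ * ∫ s, H (j + 1) ((p.1 - s) / p.2) * a s := by
  obtain ⟨C, hC, h⟩ := hH.exists_abs_succ_mul_le j
  have hM0 : 0 ≤ M := (abs_nonneg _).trans (hM 0)
  let F' : ℝ × ℝ → ℝ → ℝ × ℝ →L[ℝ] ℝ := fun q s =>
    (H (j + 1) ((q.1 - s) / q.2) * a s) •
      (q.2⁻¹ • ContinuousLinearMap.fst ℝ ℝ ℝ - ((q.1 - s) / q.2 ^ 2) •
        ContinuousLinearMap.snd ℝ ℝ ℝ)
  let bd : ℝ → ℝ := fun s =>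
    C * M * (2 * p.2) * (12 / p.2 ^ 2 + 2) * (1 + (p.1 - s) ^ 2)⁻¹
  let U : Set (ℝ × ℝ) := {q | |q.1 - p.1| < 1 ∧ p.2 / 2 < q.2 ∧ q.2 < 2 * p.2}
  have hU : U ∈ nhds p := by
    refine IsOpen.mem_nhds ?_ ?_
    · have c1 : Continuous fun q : ℝ × ℝ => |q.1 - p.1| := by fun_prop
      exact (isOpen_lt c1 continuous_const).inter
        ((isOpen_lt continuous_const continuous_snd).inter
          (isOpen_lt continuous_snd continuous_const))
    · refine ⟨by simp, by linarith, by linarith⟩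
  have hbdi : Integrable bd :=
    (integrable_inv_one_add_sq.comp_sub_left p.1).const_mul _
  have hbound : ∀ s, ∀ q ∈ U, ‖F' q s‖ ≤ bd s := by
    rintro s q ⟨h1, h2, h3⟩
    have hq : 0 < q.2 := by linarith
    have hL : ‖q.2⁻¹ • ContinuousLinearMap.fst ℝ ℝ ℝ - ((q.1 - s) / q.2 ^ 2) •
        ContinuousLinearMap.snd ℝ ℝ ℝ‖ ≤ q.2⁻¹ * (1 + |(q.1 - s) / q.2|) := by
      refine (norm_sub_le _ _).trans ?_
      rw [norm_smul, norm_smul, mul_add, mul_one]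
      have e : ‖(q.1 - s) / q.2 ^ 2‖ = q.2⁻¹ * |(q.1 - s) / q.2| := by
        rw [Real.norm_eq_abs, abs_div, abs_div, abs_of_pos hq, abs_of_pos (pow_pos hq 2)]
        field_simp
      rw [e, Real.norm_eq_abs, abs_of_pos (inv_pos.2 hq)]
      refine add_le_add ?_ ?_
      · exact mul_le_of_le_one_right (by positivity) (ContinuousLinearMap.norm_fst_le _ _ _)
      · exact mul_le_of_le_one_right (by positivity) (ContinuousLinearMap.norm_snd_le _ _ _)
    have key : q.2⁻¹ * (1 + ((q.1 - s) / q.2) ^ 2)⁻¹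
        ≤ (2 * p.2) * (12 / p.2 ^ 2 + 2) * (1 + (p.1 - s) ^ 2)⁻¹ := by
      have e : q.2⁻¹ * (1 + ((q.1 - s) / q.2) ^ 2)⁻¹ = q.2 / (q.2 ^ 2 + (q.1 - s) ^ 2) := by
        field_simp
      have h4 : 1 + (p.1 - s) ^ 2 ≤ (12 / p.2 ^ 2 + 2) * (q.2 ^ 2 + (q.1 - s) ^ 2) := by
        have h5 : (q.1 - p.1) ^ 2 < 1 := by
          rw [← sq_abs]; nlinarith [abs_nonneg (q.1 - p.1)]
        have h6 : p.2 ^ 2 / 4 ≤ q.2 ^ 2 := by nlinarith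
        have h7 : 12 / p.2 ^ 2 * q.2 ^ 2 ≥ 3 := by
          rw [ge_iff_le, div_mul_eq_mul_div, le_div_iff₀ (by positivity)]; linarith
        have h8 : 0 ≤ 12 / p.2 ^ 2 * (q.1 - s) ^ 2 := by positivity
        nlinarith [sq_nonneg ((q.1 - s) + (q.1 - p.1)), sq_nonneg q.2]
      rw [e, ← div_eq_mul_inv, div_le_div_iff₀ (by positivity) (by positivity)]
      calc q.2 * (1 + (p.1 - s) ^ 2)
          ≤ (2 * p.2) * ((12 / p.2 ^ 2 + 2) * (q.2 ^ 2 + (q.1 - s) ^ 2)) :=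
            mul_le_mul h3.le h4 (by positivity) (by positivity)
        _ = _ := by ring
    calc ‖F' q s‖ ≤ |H (j + 1) ((q.1 - s) / q.2)| * |a s| *
          (q.2⁻¹ * (1 + |(q.1 - s) / q.2|)) := by
          simp only [F', norm_smul, norm_mul, Real.norm_eq_abs]
          gcongr
      _ = (|H (j + 1) ((q.1 - s) / q.2)| * (1 + |(q.1 - s) / q.2|)) * |a s| * q.2⁻¹ := by ring
      _ ≤ (C * (1 + ((q.1 - s) / q.2) ^ 2)⁻¹) * M * q.2⁻¹ := by
          exact mul_le_mul_of_nonneg_right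
            (mul_le_mul (h _) (hM s) (abs_nonneg _) (by positivity)) (by positivity)
      _ = C * M * (q.2⁻¹ * (1 + ((q.1 - s) / q.2) ^ 2)⁻¹) := by ring
      _ ≤ C * M * ((2 * p.2) * (12 / p.2 ^ 2 + 2) * (1 + (p.1 - s) ^ 2)⁻¹) := by gcongr
      _ = bd s := by simp only [bd]; ring
  have hF'm : AEStronglyMeasurable (F' p) := by
    have hc : Continuous fun s => (p.1 - s) / p.2 ^ 2 := by fun_prop
    exact ((((hH.continuous _).measurable.comp (by fun_prop)).mul ha).aestronglyMeasurable).smul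
      (continuous_const.sub (hc.smul continuous_const)).aestronglyMeasurable
  have hF'i : Integrable (F' p) :=
    hbdi.mono' hF'm (ae_of_all _ fun s => hbound s p (mem_of_mem_nhds hU))
  refine ⟨∫ s, F' p s, ?_, ?_⟩
  · refine hasFDerivAt_integral_of_dominated_of_fderiv_le (bound := bd) (F' := F') hU ?_ ?_ hF'm
      (ae_of_all _ hbound) hbdi (ae_of_all _ ?_)
    · exact Eventually.of_forall fun q =>
        (((hH.continuous _).measurable.comp (by fun_prop)).mul ha).aestronglyMeasurable
    · exact hH.integrable_comp_mul j ha hM _ hp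
    · rintro s q ⟨h1, h2, h3⟩
      have hq : q.2 ≠ 0 := by linarith
      have hu : HasFDerivAt (fun q : ℝ × ℝ => (q.1 - s) / q.2)
          (q.2⁻¹ • ContinuousLinearMap.fst ℝ ℝ ℝ - ((q.1 - s) / q.2 ^ 2) •
            ContinuousLinearMap.snd ℝ ℝ ℝ) q := by
        have := (hasFDerivAt_fst (𝕜 := ℝ) (p := q)).sub_const s |>.mul
          ((hasDerivAt_inv hq).comp_hasFDerivAt q (hasFDerivAt_snd (𝕜 := ℝ) (p := q)))
        refine this.congr_fderiv ?_
        ext <;> simp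
        field_simp
      have := ((hH.hasDerivAt j _).comp_hasFDerivAt q hu).mul_const (a s)
      refine this.congr_fderiv ?_
      ext <;> simp [F'] <;> ring
  · rw [ContinuousLinearMap.integral_apply hF'i, ← integral_const_mul]
    refine integral_congr_ae (ae_of_all _ fun s => ?_)
    simp [F']
    ring

end IsDecayingDerivSeq
/-- Integration by parts on the line against a primitive of a locally integrable function. -/
lemma integral_mul_eq_neg_integral_mul_primitive {q p f : ℝ → ℝ}
    (hq : ∀ z, HasDerivAt q (p z) z) (hp : Continuous p) (hf : LocallyIntegrable f)
    (hqf : Integrable fun z => q z * f z)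
    (hpF : Integrable fun z => p z * ∫ t in (0 : ℝ)..z, f t)
    (hbot : Tendsto (fun z => q z * ∫ t in (0 : ℝ)..z, f t) atBot (nhds 0))
    (htop : Tendsto (fun z => q z * ∫ t in (0 : ℝ)..z, f t) atTop (nhds 0)) :
    ∫ z, q z * f z = -∫ z, p z * ∫ t in (0 : ℝ)..z, f t := by
  set F : ℝ → ℝ := fun z => ∫ t in (0 : ℝ)..z, f t
  have hfi (x y : ℝ) : IntervalIntegrable f volume x y :=
    intervalIntegrable_iff.mpr <|
      (hf.integrableOn_isCompact isCompact_uIcc).mono_set uIoc_subset_uIcc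
  have hdq : deriv q = p := funext fun z => (hq z).deriv
  have hqC : ContDiff ℝ 1 q :=
    contDiff_one_iff_deriv.2 ⟨fun z => (hq z).differentiableAt, hdq ▸ hp⟩
  have hdF : ∀ᵐ z, deriv F z = f z := by
    filter_upwards [_root_.LocallyIntegrable.ae_hasDerivAt_integral hf] with z hz using (hz 0).deriv
  have hparts : ∀ R : ℝ, 0 ≤ R → ∫ z in (-R)..R, q z * f z
      = q R * F R - q (-R) * F (-R) - ∫ z in (-R)..R, p z * F z := by
    intro R hR
    have hFac : AbsolutelyContinuousOnInterval F (-R) R :=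
      (hfi (-R) R).absolutelyContinuousOnInterval_intervalIntegral
        (mem_uIcc.2 (Or.inl ⟨by linarith, hR⟩))
    have hqac : AbsolutelyContinuousOnInterval q (-R) R :=
      hqC.contDiffOn.absolutelyContinuousOnInterval
    rw [← hdq, ← hqac.integral_mul_deriv_eq_deriv_mul hFac]
    refine intervalIntegral.integral_congr_ae ?_
    filter_upwards [hdF] with z hz _ using by rw [hz]
  have h1 := intervalIntegral_tendsto_integral hqf tendsto_neg_atTop_atBot tendsto_id
  have h2 := intervalIntegral_tendsto_integral hpF tendsto_neg_atTop_atBot tendsto_id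
  have h3 := ((htop.sub (hbot.comp tendsto_neg_atTop_atBot)).sub h2)
  rw [sub_zero, zero_sub] at h3
  refine tendsto_nhds_unique h1 (h3.congr' ?_)
  filter_upwards [eventually_ge_atTop 0] with R hR
  exact (hparts R hR).symm

/-- A primitive with sublinear growth at both ends is bounded by `ε * |z| + K`. -/
lemma exists_abs_primitive_le {f : ℝ → ℝ} {M : ℝ} (hM : ∀ z, |f z| ≤ M)
    (havg : Tendsto (fun x : ℝ => (1 / x) * ∫ z in (0 : ℝ)..x, f z) (atBot ⊔ atTop) (nhds 0))
    {ε : ℝ} (hε : 0 < ε) :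
    ∃ K, 0 ≤ K ∧ ∀ z, |∫ t in (0 : ℝ)..z, f t| ≤ ε * |z| + K := by
  have h := havg.eventually (Metric.ball_mem_nhds 0 hε)
  rw [eventually_sup, eventually_atBot, eventually_atTop] at h
  obtain ⟨⟨A, hA⟩, ⟨B, hB⟩⟩ := h
  have hM0 : 0 ≤ M := (abs_nonneg _).trans (hM 0)
  have hlip : ∀ z, |∫ t in (0 : ℝ)..z, f t| ≤ M * |z| := fun z => by
    simpa using intervalIntegral.norm_integral_le_of_norm_le_const (a := 0) (b := z) (f := f)
      (C := M) fun t _ => hM t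
  have hfar : ∀ z, z ≠ 0 → (1 / z) * (∫ t in (0 : ℝ)..z, f t) ∈ Metric.ball (0 : ℝ) ε →
      |∫ t in (0 : ℝ)..z, f t| ≤ ε * |z| := by
    intro z hz hmem
    rw [mem_ball_zero_iff, Real.norm_eq_abs, abs_mul, abs_div, abs_one, one_div,
      inv_mul_lt_iff₀ (abs_pos.2 hz)] at hmem
    linarith
  refine ⟨M * (|A| + |B|), by positivity, fun z => ?_⟩
  rcases eq_or_ne z 0 with rfl | hz
  · simp; positivity
  have hK : 0 ≤ M * (|A| + |B|) := by positivity
  by_cases hzA : z ≤ A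
  · linarith [hfar z hz (hA z hzA)]
  by_cases hzB : B ≤ z
  · linarith [hfar z hz (hB z hzB)]
  push Not at hzA hzB
  have hz' : |z| ≤ |A| + |B| := by
    rw [abs_le]
    constructor <;> linarith [neg_abs_le A, le_abs_self B, abs_nonneg A, abs_nonneg B]
  have := mul_le_mul_of_nonneg_left hz' hM0
  have : 0 ≤ ε * |z| := by positivity
  linarith [hlip z]

namespace IsDecayingDerivSeq

variable {H : ℕ → ℝ → ℝ}

lemma tendsto_mul_primitive (hH : IsDecayingDerivSeq H) (j : ℕ) {y M : ℝ} (hy : 0 < y)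
    {F : ℝ → ℝ} (hF : ∀ z, |F z| ≤ M * |z|) {l : Filter ℝ} (hl : Tendsto (fun z => |z|) l atTop) :
    Tendsto (fun z => H (j + 1) (z / y) * F z) l (nhds 0) := by
  obtain ⟨C, hC, h⟩ := hH.exists_abs_succ_mul_le j
  have hM0 : 0 ≤ M := by simpa using (abs_nonneg _).trans (hF 1)
  have hlim : Tendsto (fun z : ℝ => C * M * y * (1 + (|z| / y) ^ 2)⁻¹) l (nhds 0) := by
    have h1 : Tendsto (fun z : ℝ => 1 + (|z| / y) ^ 2) l atTop :=
      tendsto_atTop_add_const_left _ _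
        ((tendsto_pow_atTop two_ne_zero).comp (hl.atTop_div_const hy))
    simpa using h1.inv_tendsto_atTop.const_mul (C * M * y)
  refine squeeze_zero_norm (fun z => ?_) hlim
  have e : |z| = |z / y| * y := by rw [abs_div, abs_of_pos hy]; field_simp
  calc ‖H (j + 1) (z / y) * F z‖ = |H (j + 1) (z / y)| * |F z| := by
        rw [norm_mul, Real.norm_eq_abs, Real.norm_eq_abs]
    _ ≤ |H (j + 1) (z / y)| * (M * ((1 + |z / y|) * y)) := by
        have : |F z| ≤ M * ((1 + |z / y|) * y) := by
          refine (hF z).trans (mul_le_mul_of_nonneg_left ?_ hM0)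
          rw [e]; nlinarith
        gcongr
    _ = |H (j + 1) (z / y)| * (1 + |z / y|) * (M * y) := by ring
    _ ≤ C * (1 + (z / y) ^ 2)⁻¹ * (M * y) :=
        mul_le_mul_of_nonneg_right (h _) (by positivity)
    _ = _ := by rw [div_pow, div_pow, sq_abs]; ring

lemma integral_succ_comp_div (hH : IsDecayingDerivSeq H) (j : ℕ) (y : ℝ) :
    ∫ z, H (j + 1) (z / y) = 0 := by
  rw [Measure.integral_comp_div (H (j + 1)) y]
  have hint : ∀ i, Integrable (H i) := fun i => by
    obtain ⟨C, hC, h⟩ := hH.exists_abs_le i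
    exact (integrable_inv_one_add_sq.const_mul C).mono' (hH.continuous i).aestronglyMeasurable
      (ae_of_all _ h)
  rw [integral_eq_zero_of_hasDerivAt_of_integrable (hH.hasDerivAt j) (hint _) (hint _), smul_zero]

/-- A convolution at scale `y` against a kernel of zero mean is small if the averages of the data
converge. -/
lemma exists_abs_integral_le (hH : IsDecayingDerivSeq H) (j : ℕ) {a : ℝ → ℝ}
    (ha : Measurable a) {M : ℝ} (hM : ∀ s, |a s| ≤ M) {α : ℝ}
    (havg : Tendsto (fun x : ℝ => (1 / x) * ∫ z in (0 : ℝ)..x, (a (-z) - α))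
      (atBot ⊔ atTop) (nhds 0)) {δ : ℝ} (hδ : 0 < δ) :
    ∃ C, 0 ≤ C ∧ ∀ y, 0 < y → |y⁻¹ * ∫ s, H (j + 1) ((0 - s) / y) * a s| ≤ δ + C / y := by
  obtain ⟨D, hD, hbound⟩ := hH.exists_abs_succ_mul_le (j + 1)
  set f : ℝ → ℝ := fun z => a (-z) - α with hf
  have hfm : Measurable f := (ha.comp measurable_neg).sub_const α
  have hfM : ∀ z, |f z| ≤ M + |α| := fun z => (abs_sub _ _).trans (by linarith [hM (-z)])
  obtain ⟨K, hK, hFK⟩ := exists_abs_primitive_le hfM havg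
    (ε := δ / (D * π + 1)) (by positivity)
  set ε := δ / (D * π + 1) with hε
  have hε0 : 0 < ε := by positivity
  have hFlip : ∀ z, |∫ t in (0 : ℝ)..z, f t| ≤ (M + |α|) * |z| := fun z => by
    simpa using intervalIntegral.norm_integral_le_of_norm_le_const (a := 0) (b := z) (f := f)
      (C := M + |α|) fun t _ => hfM t
  have hloc : LocallyIntegrable f :=
    (locallyIntegrable_const (M + |α|)).mono hfm.aestronglyMeasurable (ae_of_all _ fun z =>
      (hfM z).trans (le_abs_self _))
  have hFc : Continuous fun z => ∫ t in (0 : ℝ)..z, f t :=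
    intervalIntegral.continuous_primitive (fun x y => intervalIntegrable_iff.mpr <|
      (hloc.integrableOn_isCompact isCompact_uIcc).mono_set uIoc_subset_uIcc) 0
  refine ⟨D * π * K, by positivity, fun y hy => ?_⟩
  have hpt : ∀ z, |H (j + 2) (z / y) / y * ∫ t in (0 : ℝ)..z, f t|
      ≤ D * (ε + K / y) * (1 + (z / y) ^ 2)⁻¹ := by
    intro z
    have e : |z| = |z / y| * y := by rw [abs_div, abs_of_pos hy]; field_simp
    have h1 : |∫ t in (0 : ℝ)..z, f t| ≤ (1 + |z / y|) * (ε * y + K) := by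
      refine (hFK z).trans ?_
      rw [e]
      nlinarith [abs_nonneg (z / y), mul_nonneg (abs_nonneg (z / y)) hK, mul_pos hε0 hy]
    rw [abs_mul, abs_div, abs_of_pos hy]
    calc |H (j + 2) (z / y)| / y * |∫ t in (0 : ℝ)..z, f t|
        ≤ |H (j + 2) (z / y)| / y * ((1 + |z / y|) * (ε * y + K)) := by gcongr
      _ = |H (j + 2) (z / y)| * (1 + |z / y|) * (ε + K / y) := by field_simp
      _ ≤ D * (1 + (z / y) ^ 2)⁻¹ * (ε + K / y) :=
          mul_le_mul_of_nonneg_right (hbound _) (by positivity)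
      _ = _ := by ring
  have hdom : Integrable fun z : ℝ => D * (ε + K / y) * (1 + (z / y) ^ 2)⁻¹ :=
    (integrable_inv_one_add_sq.comp_div hy.ne').const_mul _
  have hpF : Integrable fun z => H (j + 2) (z / y) / y * ∫ t in (0 : ℝ)..z, f t :=
    hdom.mono' ((((hH.continuous _).comp (continuous_id.div_const y)).div_const y).mul
      hFc).aestronglyMeasurable (ae_of_all _ hpt)
  have hint : ∀ {b : ℝ → ℝ} {N : ℝ}, Measurable b → (∀ s, |b s| ≤ N) →
      Integrable fun z => H (j + 1) (z / y) * b z := by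
    intro b N hb hN
    simpa using (hH.integrable_comp_mul (j + 1) (hb.comp measurable_neg) (fun s => hN (-s)) 0
      hy).comp_neg
  have hparts := integral_mul_eq_neg_integral_mul_primitive (f := f)
    (q := fun z => H (j + 1) (z / y)) (p := fun z => H (j + 2) (z / y) / y)
    (fun z => by
      simpa [div_eq_mul_inv, Function.comp_def] using
        (hH.hasDerivAt (j + 1) (z / y)).comp z ((hasDerivAt_id z).div_const y))
    (((hH.continuous _).comp (continuous_id.div_const y)).div_const y) hloc
    (hint hfm hfM) hpF
    (hH.tendsto_mul_primitive j hy hFlip tendsto_abs_atBot_atTop)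
    (hH.tendsto_mul_primitive j hy hFlip tendsto_abs_atTop_atTop)
  have hzero : ∫ z, H (j + 1) (z / y) * f z = ∫ s, H (j + 1) ((0 - s) / y) * a s := by
    have h1 : ∫ z, H (j + 1) (z / y) * f z
        = (∫ z, H (j + 1) (z / y) * a (-z)) - ∫ z, H (j + 1) (z / y) * α := by
      have hi1 : Integrable fun z => H (j + 1) (z / y) * a (-z) :=
        hint (ha.comp measurable_neg) fun s => hM (-s)
      rw [← integral_sub hi1 (hint measurable_const fun _ => le_refl |α|)]
      simp only [hf, mul_sub]
    rw [h1, integral_mul_const, hH.integral_succ_comp_div j y, zero_mul, sub_zero,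
      ← integral_neg_eq_self]
    simp
  rw [← hzero, hparts, abs_mul, abs_neg, abs_inv, abs_of_pos hy]
  have hle : |∫ z, H (j + 2) (z / y) / y * ∫ t in (0 : ℝ)..z, f t|
      ≤ D * (ε + K / y) * (y * π) := by
    refine (norm_integral_le_of_norm_le
      (f := fun z => H (j + 2) (z / y) / y * ∫ t in (0 : ℝ)..z, f t) hdom
      (ae_of_all _ hpt)).trans_eq ?_
    rw [integral_const_mul, Measure.integral_comp_div (fun u : ℝ => (1 + u ^ 2)⁻¹) y,
      integral_univ_inv_one_add_sq, abs_of_pos hy, smul_eq_mul]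
  have hεD : D * π * ε ≤ δ := by
    rw [hε, mul_div_assoc', div_le_iff₀ (by positivity)]
    nlinarith
  calc y⁻¹ * |∫ z, H (j + 2) (z / y) / y * ∫ t in (0 : ℝ)..z, f t|
      ≤ y⁻¹ * (D * (ε + K / y) * (y * π)) := by gcongr
    _ = D * π * ε + D * π * K / y := by field_simp
    _ ≤ δ + D * π * K / y := by gcongr

end IsDecayingDerivSeq

/-- The function `y₂ ^ (-k - 1) ∫ (A k ((y₁ - s) / y₂) a(s) + B k ((y₁ - s) / y₂) b(s)) ds`, written
as a sum of two integrals. -/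
def dilatedConvolution (A B : ℕ → ℝ → ℝ) (a b : ℝ → ℝ) (k : ℕ) (q : ℝ × ℝ) : ℝ :=
  q.2⁻¹ ^ (k + 1) *
    ((∫ s, A k ((q.1 - s) / q.2) * a s) + ∫ s, B k ((q.1 - s) / q.2) * b s)

section DilatedConvolution

variable {A B : ℕ → ℝ → ℝ} {a b : ℝ → ℝ} {M : ℝ}

lemma exists_hasFDerivAt_dilatedConvolution (hA : IsDecayingDerivSeq A)
    (hB : IsDecayingDerivSeq B) (ha : Measurable a) (hb : Measurable b) (haM : ∀ s, |a s| ≤ M)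
    (hbM : ∀ s, |b s| ≤ M) (k : ℕ) {p : ℝ × ℝ} (hp : 0 < p.2) :
    ∃ L : ℝ × ℝ →L[ℝ] ℝ, HasFDerivAt (dilatedConvolution A B a b k) L p ∧
      L (1, 0) = dilatedConvolution A B a b (k + 1) p := by
  obtain ⟨LA, hLA, eA⟩ := hA.exists_hasFDerivAt_integral k ha haM hp
  obtain ⟨LB, hLB, eB⟩ := hB.exists_hasFDerivAt_integral k hb hbM hp
  have hc := ((hasDerivAt_inv hp.ne').pow (k + 1)).comp_hasFDerivAt p
    (hasFDerivAt_snd (𝕜 := ℝ) (p := p))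
  refine ⟨_, hc.mul (hLA.add hLB), ?_⟩
  simp [eA, eB, dilatedConvolution]
  ring

lemma exists_abs_pow_mul_dilatedConvolution_le (hA : IsDecayingDerivSeq A)
    (hB : IsDecayingDerivSeq B) (ha : Measurable a) (hb : Measurable b) (haM : ∀ s, |a s| ≤ M)
    (hbM : ∀ s, |b s| ≤ M) {α β : ℝ}
    (ha_avg : Tendsto (fun x : ℝ => (1 / x) * ∫ z in (0 : ℝ)..x, (a (-z) - α))
      (atBot ⊔ atTop) (nhds 0))
    (hb_avg : Tendsto (fun x : ℝ => (1 / x) * ∫ z in (0 : ℝ)..x, (b (-z) - β))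
      (atBot ⊔ atTop) (nhds 0)) (j : ℕ) {δ : ℝ} (hδ : 0 < δ) :
    ∃ C, 0 ≤ C ∧ ∀ y, 0 < y →
      |y ^ (j + 1) * dilatedConvolution A B a b (j + 1) (0, y)| ≤ δ + C / y := by
  obtain ⟨C, hC, h⟩ := hA.exists_abs_integral_le j ha haM ha_avg (half_pos hδ)
  obtain ⟨D, hD, h'⟩ := hB.exists_abs_integral_le j hb hbM hb_avg (half_pos hδ)
  refine ⟨C + D, add_nonneg hC hD, fun y hy => ?_⟩
  have e : y ^ (j + 1) * dilatedConvolution A B a b (j + 1) (0, y)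
      = y⁻¹ * (∫ s, A (j + 1) ((0 - s) / y) * a s)
        + y⁻¹ * ∫ s, B (j + 1) ((0 - s) / y) * b s := by
    simp only [dilatedConvolution]
    rw [pow_succ y⁻¹ (j + 1), ← mul_assoc, ← mul_assoc, ← mul_pow, mul_inv_cancel₀ hy.ne',
      one_pow, one_mul, mul_add]
  rw [e]
  refine (abs_add_le _ _).trans ((add_le_add (h y hy) (h' y hy)).trans_eq ?_)
  ring

end DilatedConvolution

open Polynomial in
/-- The profile `2 s ^ i / (π (1 + s ^ 2) ^ 2)` of the Stokes Poisson kernel, followed by its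
derivatives. -/
def stokesProfile (i j : ℕ) (s : ℝ) : ℝ :=
  (derivNumerator (C (2 / π) * X ^ i) j).eval s / (1 + s ^ 2) ^ (j + 2)

open Polynomial in
lemma isDecayingDerivSeq_stokesProfile {i : ℕ} (hi : i ≤ 2) :
    IsDecayingDerivSeq (stokesProfile i) :=
  isDecayingDerivSeq_derivNumerator ((natDegree_C_mul_X_pow_le _ _).trans hi)

lemma stokesProfile_zero (i : ℕ) (s : ℝ) :
    stokesProfile i 0 s = 2 / π * s ^ i / (1 + s ^ 2) ^ 2 := by
  simp [stokesProfile, derivNumerator]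

lemma Gker_eq_stokesProfile (t : ℝ) {y : ℝ} (hy : 0 < y) (w : ℝ × ℝ) :
    Gker t y w = (y⁻¹ * (stokesProfile 2 0 (t / y) * w.1 + stokesProfile 1 0 (t / y) * w.2),
      y⁻¹ * (stokesProfile 1 0 (t / y) * w.1 + stokesProfile 0 0 (t / y) * w.2)) := by
  have h : t ^ 2 + y ^ 2 ≠ 0 := by positivity
  simp only [Gker, stokesProfile_zero]
  ext
  · simp
    field_simp
    ring
  · simp
    field_simp
    ring

lemma integral_Gker_eq_s15 {v₀ : ℝ → ℝ × ℝ} (hmeas : Measurable v₀) {M : ℝ}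
    (hM : ∀ t, ‖v₀ t‖ ≤ M) {q : ℝ × ℝ} (hq : 0 < q.2) :
    ∫ t, Gker t q.2 (v₀ (q.1 - t)) =
      (dilatedConvolution (stokesProfile 2) (stokesProfile 1) (fun s => (v₀ s).1)
          (fun s => (v₀ s).2) 0 q,
        dilatedConvolution (stokesProfile 1) (stokesProfile 0) (fun s => (v₀ s).1)
          (fun s => (v₀ s).2) 0 q) := by
  rw [← integral_sub_left_eq_self _ volume q.1]
  simp only [Gker_eq_stokesProfile _ hq, sub_sub_cancel]
  have h1 {i : ℕ} (hi : i ≤ 2) :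
      Integrable fun s => stokesProfile i 0 ((q.1 - s) / q.2) * (v₀ s).1 :=
    (isDecayingDerivSeq_stokesProfile hi).integrable_comp_mul 0 hmeas.fst
      (fun s => (norm_fst_le _).trans (hM s)) q.1 hq
  have h2 {i : ℕ} (hi : i ≤ 2) :
      Integrable fun s => stokesProfile i 0 ((q.1 - s) / q.2) * (v₀ s).2 :=
    (isDecayingDerivSeq_stokesProfile hi).integrable_comp_mul 0 hmeas.snd
      (fun s => (norm_snd_le _).trans (hM s)) q.1 hq
  have h12 {i j : ℕ} (hi : i ≤ 2) (hj : j ≤ 2) :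
      Integrable fun s => q.2⁻¹ * (stokesProfile i 0 ((q.1 - s) / q.2) * (v₀ s).1
        + stokesProfile j 0 ((q.1 - s) / q.2) * (v₀ s).2) :=
    ((h1 hi).add (h2 hj)).const_mul _
  rw [integral_pair (h12 (by omega) (by omega)) (h12 (by omega) (by omega))]
  simp only [integral_const_mul, dilatedConvolution, zero_add, pow_one]
  rw [integral_add (h1 (by omega)) (h2 (by omega)), integral_add (h1 (by omega)) (h2 (by omega))]

lemma iterate_pdOp1_eq {A B A' B' : ℕ → ℝ → ℝ} (hA : IsDecayingDerivSeq A)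
    (hB : IsDecayingDerivSeq B) (hA' : IsDecayingDerivSeq A') (hB' : IsDecayingDerivSeq B')
    {a b : ℝ → ℝ} {M : ℝ} (ha : Measurable a) (hb : Measurable b) (haM : ∀ s, |a s| ≤ M)
    (hbM : ∀ s, |b s| ≤ M) {v : ℝ × ℝ → ℝ × ℝ}
    (hv : ∀ q : ℝ × ℝ, 0 < q.2 →
      v q = (dilatedConvolution A B a b 0 q, dilatedConvolution A' B' a b 0 q))
    (k : ℕ) {q : ℝ × ℝ} (hq : 0 < q.2) :
    (pdOp1^[k] v) q = (dilatedConvolution A B a b k q, dilatedConvolution A' B' a b k q) := by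
  induction k generalizing q with
  | zero => exact hv q hq
  | succ k ih =>
    rw [Function.iterate_succ_apply']
    obtain ⟨L, hL, e⟩ := exists_hasFDerivAt_dilatedConvolution hA hB ha hb haM hbM k hq
    obtain ⟨L', hL', e'⟩ := exists_hasFDerivAt_dilatedConvolution hA' hB' ha hb haM hbM k hq
    have hev : pdOp1^[k] v =ᶠ[nhds q]
        fun q => (dilatedConvolution A B a b k q, dilatedConvolution A' B' a b k q) := by
      filter_upwards [(isOpen_lt continuous_const continuous_snd).mem_nhds hq] with r hr
        using ih hr
    rw [pdOp1, hev.fderiv_eq, (hL.prodMk hL').fderiv, ContinuousLinearMap.prod_apply, e, e']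

/-- Decay of tangential derivatives: if `v₀` is bounded measurable and its averages
`(1/y₁)∫₀^{y₁}(v₀(−z) − α) dz` tend to `0` as `|y₁| → ∞`, and
`v(y) = ∫ G(t,y₂) v₀(y₁−t) dt`, then for every `k ≥ 1` and `δ > 0` there is `C_δ > 0`
with `|y₂^k ∂_{y₁}^k v(0,y₂)| ≤ δ + C_δ/y₂` for all `y₂ > 0`; consequently
`y₂^k ∂_{y₁}^k v(0,y₂) → 0` as `y₂ → ∞`. -/
theorem stmt15 (v₀ : ℝ → ℝ × ℝ) (hmeas : Measurable v₀)
    (hbd : ∃ C : ℝ, ∀ t, ‖v₀ t‖ ≤ C)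
    (α : ℝ × ℝ)
    (havg : Tendsto (fun y₁ : ℝ => (1 / y₁) • ∫ z in (0 : ℝ)..y₁, (v₀ (-z) - α))
      (Filter.atBot ⊔ Filter.atTop) (nhds 0))
    (v : ℝ × ℝ → ℝ × ℝ) (hv : ∀ y : ℝ × ℝ, v y = ∫ t : ℝ, Gker t y.2 (v₀ (y.1 - t)))
    (k : ℕ) (hk : 1 ≤ k) :
    (∀ δ > 0, ∃ C > 0, ∀ y₂ : ℝ, 0 < y₂ →
      ‖y₂ ^ k • (pdOp1^[k] v) (0, y₂)‖ ≤ δ + C / y₂) ∧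
    Tendsto (fun y₂ : ℝ => y₂ ^ k • (pdOp1^[k] v) (0, y₂)) atTop (nhds 0) := by
  obtain ⟨M, hM⟩ := hbd
  obtain ⟨j, rfl⟩ : ∃ j, k = j + 1 := ⟨k - 1, by omega⟩
  have haM : ∀ s, |(v₀ s).1| ≤ M := fun s => (norm_fst_le _).trans (hM s)
  have hbM : ∀ s, |(v₀ s).2| ≤ M := fun s => (norm_snd_le _).trans (hM s)
  have hint : ∀ x : ℝ, IntervalIntegrable (fun z => v₀ (-z) - α) volume 0 x := fun x =>
    (intervalIntegrable_const (c := M + ‖α‖)).mono_fun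
      ((hmeas.comp measurable_neg).sub_const α).aestronglyMeasurable (ae_of_all _ fun z =>
        (norm_sub_le _ _).trans ((add_le_add_left (hM (-z)) ‖α‖).trans (le_abs_self _)))
  have ha_avg : Tendsto (fun x : ℝ => (1 / x) * ∫ z in (0 : ℝ)..x, ((v₀ (-z)).1 - α.1))
      (atBot ⊔ atTop) (nhds 0) := by
    refine ((continuous_fst.tendsto _).comp havg).congr fun x => ?_
    simpa using Or.inl ((ContinuousLinearMap.fst ℝ ℝ ℝ).intervalIntegral_comp_comm (hint x)).symm
  have hb_avg : Tendsto (fun x : ℝ => (1 / x) * ∫ z in (0 : ℝ)..x, ((v₀ (-z)).2 - α.2))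
      (atBot ⊔ atTop) (nhds 0) := by
    refine ((continuous_snd.tendsto _).comp havg).congr fun x => ?_
    simpa using Or.inl ((ContinuousLinearMap.snd ℝ ℝ ℝ).intervalIntegral_comp_comm (hint x)).symm
  have h0 := isDecayingDerivSeq_stokesProfile (i := 0) (by omega)
  have h1 := isDecayingDerivSeq_stokesProfile (i := 1) (by omega)
  have h2 := isDecayingDerivSeq_stokesProfile (i := 2) le_rfl
  have hest : ∀ δ > 0, ∃ C > 0, ∀ y₂ : ℝ, 0 < y₂ →
      ‖y₂ ^ (j + 1) • (pdOp1^[j + 1] v) (0, y₂)‖ ≤ δ + C / y₂ := by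
    intro δ hδ
    obtain ⟨C, hC, h⟩ := exists_abs_pow_mul_dilatedConvolution_le h2 h1 hmeas.fst hmeas.snd
      haM hbM ha_avg hb_avg j hδ
    obtain ⟨D, hD, h'⟩ := exists_abs_pow_mul_dilatedConvolution_le h1 h0 hmeas.fst hmeas.snd
      haM hbM ha_avg hb_avg j hδ
    refine ⟨C + D + 1, by positivity, fun y hy => ?_⟩
    rw [iterate_pdOp1_eq h2 h1 h1 h0 hmeas.fst hmeas.snd haM hbM
      (fun q hq => (hv q).trans (integral_Gker_eq_s15 hmeas hM hq)) (j + 1) (q := (0, y)) hy]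
    refine max_le ((h y hy).trans ?_) ((h' y hy).trans ?_)
    · gcongr; linarith
    · gcongr; linarith
  refine ⟨hest, Metric.tendsto_nhds.2 fun ε hε => ?_⟩
  obtain ⟨C, hC, h⟩ := hest (ε / 2) (half_pos hε)
  filter_upwards [eventually_gt_atTop 0, eventually_gt_atTop (C / (ε / 2))] with y hy hy'
  rw [dist_zero_right]
  have : C / y < ε / 2 := by
    rw [div_lt_iff₀ (half_pos hε)] at hy'
    rw [div_lt_iff₀ hy]
    linarith
  linarith [h y hy]
end
end
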